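/- Suppose that every Gorenstein polytope of dimension d and degree s with d > 2s is reducible. Then every Gorenstein polytope of dimension d and degree s with d ≥ 3s is a lattice pyramid. -/

import Mathlib

open Pointwise

/-- A point of `ℝ^d` is a lattice point if all its coordinates are integers. -/
def IsLatticePt {d : ℕ} (x : Fin d → ℝ) : Prop := ∀ i, ∃ z : ℤ, x i = (z : ℝ)

/-- A lattice polytope is the (non-empty) convex hull of finitely many lattice points. -/
def IsLatticePolytope {d : ℕ} (P : Set (Fin d → ℝ)) : Prop :=
  ∃ V : Finset (Fin d → ℝ), V.Nonempty ∧ (∀ v ∈ V, IsLatticePt v) ∧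
    P = convexHull ℝ (V : Set (Fin d → ℝ))

/-- The dimension of a polytope: the dimension of the direction of its affine hull. -/
noncomputable def polyDim {d : ℕ} (P : Set (Fin d → ℝ)) : ℕ :=
  Module.finrank ℝ (affineSpan ℝ P).direction

/-- A polytope is hollow if its relative interior contains no lattice point. -/
def IsHollow {d : ℕ} (P : Set (Fin d → ℝ)) : Prop :=
  ∀ x ∈ intrinsicInterior ℝ P, ¬ IsLatticePt x

/-- A facet of `P`: a non-empty exposed face of dimension `dim P - 1`. -/
def IsFacet {d : ℕ} (P F : Set (Fin d → ℝ)) : Prop :=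
  IsExposed ℝ P F ∧ F.Nonempty ∧ polyDim F + 1 = polyDim P

/-- An affine functional is integral on `P` if it takes integer values on all
lattice points of the affine hull of `P`. -/
def IsIntegralOn {d : ℕ} (P : Set (Fin d → ℝ)) (u : (Fin d → ℝ) →ᵃ[ℝ] ℝ) : Prop :=
  ∀ y ∈ affineSpan ℝ P, IsLatticePt y → ∃ z : ℤ, u y = (z : ℝ)

/-- `P` is reflexive: there is a lattice point `x` in the relative interior of `P`
such that every facet of `P` has lattice distance one from `x`, i.e. for every facet `F`
there is an integral affine functional that is constant on `F` and exceeds its value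
at `x` by exactly `1`. -/
def IsReflexivePolytope {d : ℕ} (P : Set (Fin d → ℝ)) : Prop :=
  ∃ x ∈ intrinsicInterior ℝ P, IsLatticePt x ∧
    ∀ F : Set (Fin d → ℝ), IsFacet P F →
      ∃ u : (Fin d → ℝ) →ᵃ[ℝ] ℝ, IsIntegralOn P u ∧ ∀ f ∈ F, u f = u x + 1

/-- `P` is Gorenstein if some positive integer multiple `r • P` is reflexive. -/
def IsGorenstein {d : ℕ} (P : Set (Fin d → ℝ)) : Prop :=
  ∃ r : ℕ, 0 < r ∧ IsReflexivePolytope ((r : ℝ) • P)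

/-- `P` is Gorenstein of codegree `r` if `r • P` is reflexive (`r` positive). -/
def IsGorensteinOfCodeg {d : ℕ} (P : Set (Fin d → ℝ)) (r : ℕ) : Prop :=
  0 < r ∧ IsReflexivePolytope ((r : ℝ) • P)

/-- The codegree of `P`: the smallest positive integer `r` such that `r • P` is not hollow. -/
noncomputable def polyCodeg {d : ℕ} (P : Set (Fin d → ℝ)) : ℕ :=
  sInf {r : ℕ | 0 < r ∧ ¬ IsHollow ((r : ℝ) • P)}

/-- The degree of `P`: `dim P + 1 - codeg P`. -/
noncomputable def polyDeg {d : ℕ} (P : Set (Fin d → ℝ)) : ℕ :=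
  polyDim P + 1 - polyCodeg P

/-- Unimodular equivalence of lattice polytopes: an affine map carrying `P` onto `Q`,
with an affine inverse on affine hulls, such that both maps preserve lattice points of
the affine hulls. -/
def LatticeIso {d e : ℕ} (P : Set (Fin d → ℝ)) (Q : Set (Fin e → ℝ)) : Prop :=
  ∃ (f : (Fin d → ℝ) →ᵃ[ℝ] (Fin e → ℝ)) (g : (Fin e → ℝ) →ᵃ[ℝ] (Fin d → ℝ)),
    f '' P = Q ∧ g '' Q = P ∧
    (∀ x ∈ affineSpan ℝ P, g (f x) = x) ∧ (∀ y ∈ affineSpan ℝ Q, f (g y) = y) ∧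
    (∀ x ∈ affineSpan ℝ P, IsLatticePt x → IsLatticePt (f x)) ∧
    (∀ y ∈ affineSpan ℝ Q, IsLatticePt y → IsLatticePt (g y))

/-- The lattice pyramid `conv(P' × {0}, (0,1))` over `P' ⊆ ℝ^m`. -/
def pyramidOver {m : ℕ} (P' : Set (Fin m → ℝ)) : Set (Fin (m + 1) → ℝ) :=
  convexHull ℝ ((fun x => Fin.snoc x (0 : ℝ)) '' P' ∪ {Fin.snoc (0 : Fin m → ℝ) (1 : ℝ)})

/-- `P` is a lattice pyramid if it is a single lattice point or is isomorphic to a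
lattice pyramid over a lattice polytope. -/
def IsLatticePyramid {d : ℕ} (P : Set (Fin d → ℝ)) : Prop :=
  (∃ x : Fin d → ℝ, IsLatticePt x ∧ P = {x}) ∨
  ∃ (m : ℕ) (P' : Set (Fin m → ℝ)), IsLatticePolytope P' ∧ LatticeIso P (pyramidOver P')

/-- The Cayley polytope `P_1 * ⋯ * P_l ⊆ ℝ^{n+l}` of `P_1, …, P_l ⊆ ℝ^n`:
the convex hull of the sets `P_i × {e_i}`. -/
def cayley {n l : ℕ} (P : Fin l → Set (Fin n → ℝ)) : Set (Fin (n + l) → ℝ) :=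
  convexHull ℝ (⋃ i : Fin l, (fun x => Fin.append x (Pi.single i (1 : ℝ))) '' P i)

/-- The Cayley polytope `F * G ⊆ ℝ^{n+2}` of two polytopes `F, G ⊆ ℝ^n`. -/
def cayleyTwo {n : ℕ} (F G : Set (Fin n → ℝ)) : Set (Fin (n + 2) → ℝ) :=
  convexHull ℝ
    ((fun x => Fin.append x ![(1 : ℝ), 0]) '' F ∪ (fun x => Fin.append x ![(0 : ℝ), 1]) '' G)

/-- `P` is a Cayley join of `F` and `G` if `P ≅ F * G` and `dim F + dim G = dim P - 1`. -/
def IsCayleyJoin {d n : ℕ} (P : Set (Fin d → ℝ)) (F G : Set (Fin n → ℝ)) : Prop :=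
  LatticeIso P (cayleyTwo F G) ∧ polyDim F + polyDim G + 1 = polyDim P

/-- `P` is reducible with factors `F` and `G`: a Cayley join with
`codeg F + codeg G = codeg P`. -/
def IsReducibleWith {d n : ℕ} (P : Set (Fin d → ℝ)) (F G : Set (Fin n → ℝ)) : Prop :=
  IsCayleyJoin P F G ∧ polyCodeg F + polyCodeg G = polyCodeg P

/-- `P` is reducible: it is a single lattice point (by convention) or is reducible
with some factors `F` and `G` which are lattice polytopes. -/
def IsReducible {d : ℕ} (P : Set (Fin d → ℝ)) : Prop :=
  (∃ x : Fin d → ℝ, IsLatticePt x ∧ P = {x}) ∨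
  ∃ (n : ℕ) (F G : Set (Fin n → ℝ)), IsLatticePolytope F ∧ IsLatticePolytope G ∧
    IsReducibleWith P F G

/-- `P` is a Cayley polytope: a single lattice point, or isomorphic to a Cayley polytope
of `l > 1` lattice polytopes. -/
def IsCayleyPolytope {d : ℕ} (P : Set (Fin d → ℝ)) : Prop :=
  (∃ x : Fin d → ℝ, IsLatticePt x ∧ P = {x}) ∨
  ∃ (n l : ℕ) (Q : Fin l → Set (Fin n → ℝ)), 1 < l ∧ (∀ i, IsLatticePolytope (Q i)) ∧
    LatticeIso P (cayley Q)

/-- `P` is IDP if for every `k ≥ 2` every lattice point of `k • P` is a sum of `k`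
lattice points of `P`. -/
def IsIDP {d : ℕ} (P : Set (Fin d → ℝ)) : Prop :=
  ∀ k : ℕ, 2 ≤ k → ∀ x : Fin d → ℝ, IsLatticePt x → x ∈ (k : ℝ) • P →
    ∃ p : Fin k → (Fin d → ℝ), (∀ i, p i ∈ P ∧ IsLatticePt (p i)) ∧ x = ∑ i, p i

/-- The standard simplex `Δ_s = conv(0, e_1, …, e_s) ⊆ ℝ^s`. -/
def stdSimplexLP (s : ℕ) : Set (Fin s → ℝ) :=
  convexHull ℝ (insert 0 (Set.range fun i : Fin s => Pi.single i (1 : ℝ)))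

/-- The product of `F ⊆ ℝ^m` and `G ⊆ ℝ^n` inside `ℝ^{m+n}`. -/
def prodPoly {m n : ℕ} (F : Set (Fin m → ℝ)) (G : Set (Fin n → ℝ)) : Set (Fin (m + n) → ℝ) :=
  (fun p : (Fin m → ℝ) × (Fin n → ℝ) => Fin.append p.1 p.2) '' (F ×ˢ G)

/-- The free join `conv(F × 0 × {0} ∪ 0 × G × {1}) ⊆ ℝ^m × ℝ^n × ℝ`. -/
def freeJoin {m n : ℕ} (F : Set (Fin m → ℝ)) (G : Set (Fin n → ℝ)) :
    Set (Fin (m + n + 1) → ℝ) :=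
  convexHull ℝ
    ((fun x => Fin.snoc (Fin.append x (0 : Fin n → ℝ)) (0 : ℝ)) '' F ∪
     (fun y => Fin.snoc (Fin.append (0 : Fin m → ℝ) y) (1 : ℝ)) '' G)

/-!
Work in the cone over `P`, where Gorenstein means that some interior lattice point `m` takes the
value `1` on every primitive facet functional; then `m` is the only interior lattice point at its
height, and this height is the codegree.

Let `P` be reducible with factors `F` and `G`. The cone over `P` is the direct sum of the cones over
`F` and `G`, and since codegrees add up, `m` is the sum of interior lattice points of the two
summands. Every facet functional of the cone over `F`, extended by zero, is a facet functional of
the cone over `P`, hence integral on the whole lattice over `P`, even though this lattice may be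
larger than the sum of the lattices over `F` and `G`. So `F` is Gorenstein, and if `F` is a pyramid,
the height function of its apex extends to `P`, making `P` a pyramid.

Dimensions satisfy `dim F + dim G = dim P - 1` and degrees add up, so `c * deg P ≤ dim P` passes to
one of the factors, and one concludes by induction on the dimension.
-/

section Cones

variable {E F ι : Type*} [AddCommGroup E] [Module ℝ E] [AddCommGroup F] [Module ℝ F]
  {C : PointedCone ℝ E} {m : E} {l : E →ₗ[ℝ] ℝ}

/-- `m` lies in the relative interior of the cone `C`: from `m` one can move a little backwards
along every element of `C`. -/
def IsConeInterior (C : PointedCone ℝ E) (m : E) : Prop :=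
  ∀ z ∈ C, ∃ ε : ℝ, 0 < ε ∧ m - ε • z ∈ C

lemma IsConeInterior.mem (h : IsConeInterior C m) : m ∈ C := by
  obtain ⟨ε, -, hε⟩ := h 0 C.zero_mem
  simpa using hε

lemma exists_sub_smul_add_mem {y z : E} (hy : ∃ ε : ℝ, 0 < ε ∧ m - ε • y ∈ C)
    (hz : ∃ ε : ℝ, 0 < ε ∧ m - ε • z ∈ C) : ∃ ε : ℝ, 0 < ε ∧ m - ε • (y + z) ∈ C := by
  obtain ⟨a, ha, hya⟩ := hy
  obtain ⟨b, hb, hzb⟩ := hz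
  refine ⟨a * b / (a + b), by positivity, ?_⟩
  have combination : m - (a * b / (a + b)) • (y + z) =
      (b / (a + b)) • (m - a • y) + (a / (a + b)) • (m - b • z) := by
    match_scalars <;> field_simp; ring
  rw [combination]
  exact C.add_mem (C.smul_mem (by positivity) hya) (C.smul_mem (by positivity) hzb)

lemma isConeInterior_hull {s : Set E} (hm : m ∈ PointedCone.hull ℝ s)
    (h : ∀ z ∈ s, ∃ ε : ℝ, 0 < ε ∧ m - ε • z ∈ PointedCone.hull ℝ s) :
    IsConeInterior (PointedCone.hull ℝ s) m := by
  intro z hz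
  induction hz using Submodule.span_induction with
  | mem z hz => exact h z hz
  | zero => exact ⟨1, one_pos, by simpa using hm⟩
  | add y z _ _ hy hz => exact exists_sub_smul_add_mem hy hz
  | smul c z _ ih =>
    obtain ⟨ε, hε, hmem⟩ := ih
    rcases eq_or_ne c 0 with rfl | hc
    · exact ⟨1, one_pos, by simpa using hm⟩
    · have hc : 0 < (c : ℝ) := c.2.lt_of_ne' fun h => hc (Subtype.ext h)
      refine ⟨ε / c, div_pos hε hc, ?_⟩
      rwa [← Nonneg.coe_smul, smul_smul, div_mul_cancel₀ _ hc.ne']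

lemma isConeInterior_sum (V : Finset E) :
    IsConeInterior (PointedCone.hull ℝ (V : Set E)) (∑ v ∈ V, v) := by
  classical
  have mem_of_subset (s : Finset E) (hs : s ⊆ V) :
      ∑ v ∈ s, v ∈ PointedCone.hull ℝ (V : Set E) :=
    Submodule.sum_mem _ fun v hv => PointedCone.subset_hull (hs hv)
  refine isConeInterior_hull (mem_of_subset V subset_rfl) fun v hv => ⟨1, one_pos, ?_⟩
  rw [one_smul, ← Finset.add_sum_erase V _ hv, add_sub_cancel_left]
  exact mem_of_subset _ (V.erase_subset v)

lemma IsConeInterior.sup_map {G : Type*} [AddCommGroup G] [Module ℝ G] {D : PointedCone ℝ F}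
    {n : F} (hm : IsConeInterior C m) (hn : IsConeInterior D n) (f : E →ₗ[ℝ] G) (g : F →ₗ[ℝ] G) :
    IsConeInterior (C.map f ⊔ D.map g) (f m + g n) := by
  have hmem {y : E} {z : F} (hy : y ∈ C) (hz : z ∈ D) : f y + g z ∈ C.map f ⊔ D.map g :=
    Submodule.add_mem_sup (PointedCone.mem_map.2 ⟨y, hy, rfl⟩) (PointedCone.mem_map.2 ⟨z, hz, rfl⟩)
  intro z hz
  obtain ⟨_, ⟨y, hy, rfl⟩, _, ⟨w, hw, rfl⟩, rfl⟩ := Submodule.mem_sup.1 hz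
  refine exists_sub_smul_add_mem ?_ ?_
  · obtain ⟨ε, hε, h⟩ := hm y hy
    exact ⟨ε, hε, by convert hmem h hn.mem using 1; simp only [map_sub, map_smul]; abel⟩
  · obtain ⟨ε, hε, h⟩ := hn w hw
    exact ⟨ε, hε, by convert hmem hm.mem h using 1; simp only [map_sub, map_smul]; abel⟩

lemma IsConeInterior.pos (hm : IsConeInterior C m) (hl : ∀ z ∈ C, 0 ≤ l z) {z : E} (hz : z ∈ C)
    (hlz : l z ≠ 0) : 0 < l m := by
  obtain ⟨ε, hε, h⟩ := hm z hz
  have hsub : 0 ≤ l m - ε * l z := by simpa using hl _ h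
  have := mul_pos hε ((hl z hz).lt_of_ne' hlz)
  linarith

lemma nonneg_of_mem_hull {s : Set E} (hl : ∀ v ∈ s, 0 ≤ l v) {z : E}
    (hz : z ∈ PointedCone.hull ℝ s) : 0 ≤ l z := by
  have hull_le : PointedCone.hull ℝ s ≤ (PointedCone.positive ℝ ℝ).comap l :=
    Submodule.span_le.2 fun v hv => (PointedCone.mem_positive ℝ ℝ).2 (hl v hv)
  exact (PointedCone.mem_positive ℝ ℝ).1 (hull_le hz)

lemma span_hull (s : Set E) :
    Submodule.span ℝ (PointedCone.hull ℝ s : Set E) = Submodule.span ℝ s :=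
  Submodule.span_span_of_tower ..

/-- `l` is the linear functional cutting out a facet of the cone `C` with relative interior point
`m`, scaled so that `l m = 1`. The facet property is the field `ker_le`: the face of `C` on which
`l` vanishes spans all of `ker l` inside the linear span of `C`. -/
structure IsFacetFunctional (C : PointedCone ℝ E) (m : E) (l : E →ₗ[ℝ] ℝ) : Prop where
  nonneg : ∀ z ∈ C, 0 ≤ l z
  apply_eq_one : l m = 1
  ker_le : Submodule.span ℝ (C : Set E) ⊓ LinearMap.ker l ≤ Submodule.span ℝ {z ∈ C | l z = 0}

lemma IsFacetFunctional.eqOn_span (hl : IsFacetFunctional C m l) (hm : m ∈ C) {l' : E →ₗ[ℝ] ℝ}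
    (h0 : ∀ z ∈ C, l z = 0 → l' z = 0) (h1 : l' m = 1) {z : E}
    (hz : z ∈ Submodule.span ℝ (C : Set E)) : l' z = l z := by
  have hdiff : z - l z • m ∈ Submodule.span ℝ {z ∈ C | l z = 0} :=
    hl.ker_le ⟨Submodule.sub_mem _ hz (Submodule.smul_mem _ _ (Submodule.subset_span hm)),
      by simp [hl.apply_eq_one]⟩
  have hker : Submodule.span ℝ {z ∈ C | l z = 0} ≤ LinearMap.ker l' :=
    Submodule.span_le.2 fun z hz => h0 z hz.1 hz.2
  have hzero : l' (z - l z • m) = 0 := hker hdiff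
  simpa [h1, sub_eq_zero] using hzero

lemma exists_ratio (s : Finset ι) {f g : ι → ℝ} (hf : ∀ i ∈ s, 0 ≤ f i) (hg : ∃ i ∈ s, g i < 0) :
    ∃ t : ℝ, 0 ≤ t ∧ (∀ i ∈ s, 0 ≤ f i + t * g i) ∧ ∃ i ∈ s, g i < 0 ∧ f i + t * g i = 0 := by
  obtain ⟨i₀, hi₀⟩ := hg
  obtain ⟨j, hj, hmin⟩ := Finset.exists_min_image {i ∈ s | g i < 0} (fun i => f i / -g i)
    ⟨i₀, Finset.mem_filter.2 hi₀⟩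
  obtain ⟨hjs, hgj⟩ := Finset.mem_filter.1 hj
  have ht : 0 ≤ f j / -g j := div_nonneg (hf j hjs) (by linarith)
  refine ⟨f j / -g j, ht, fun i hi => ?_, j, hjs, hgj, by field_simp [hgj.ne]; ring⟩
  rcases lt_or_ge (g i) 0 with hgi | hgi
  · have := (le_div_iff₀ (neg_pos.2 hgi)).1 (hmin i (Finset.mem_filter.2 ⟨hi, hgi⟩))
    linarith
  · exact add_nonneg (hf i hi) (mul_nonneg ht hgi)

lemma exists_direction {V : Finset E} (hm : IsConeInterior (PointedCone.hull ℝ (V : Set E)) m)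
    (h0 : ∀ v ∈ V, 0 ≤ l v) (h1 : l m = 1)
    (hl : ¬ IsFacetFunctional (PointedCone.hull ℝ (V : Set E)) m l) (z : E) :
    ∃ w : E →ₗ[ℝ] ℝ, w m = 0 ∧ (∀ v ∈ V, l v = 0 → w v = 0) ∧ w z ≤ 0 ∧ ∃ v ∈ V, w v < 0 := by
  set C := PointedCone.hull ℝ (V : Set E)
  obtain ⟨x, ⟨hxC, hlx⟩, hx⟩ : ∃ x ∈ Submodule.span ℝ (C : Set E) ⊓ LinearMap.ker l,
      x ∉ Submodule.span ℝ {z ∈ C | l z = 0} :=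
    SetLike.not_le_iff_exists.1 fun hker => hl ⟨fun _ => nonneg_of_mem_hull h0, h1, hker⟩
  obtain ⟨u, hux, hu⟩ := Submodule.exists_le_ker_of_notMem hx
  have hlx : l x = 0 := hlx
  have hu {v : E} (hv : v ∈ C) (hlv : l v = 0) : u v = 0 := hu (Submodule.subset_span ⟨hv, hlv⟩)
  obtain ⟨w, hwx, hwm, hwV, hwz⟩ : ∃ w : E →ₗ[ℝ] ℝ, w x ≠ 0 ∧ w m = 0 ∧
      (∀ v ∈ V, l v = 0 → w v = 0) ∧ w z ≤ 0 := by
    have hV (v : E) (hv : v ∈ V) (hlv : l v = 0) : (u - u m • l) v = 0 := by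
      simp [hlv, hu (PointedCone.subset_hull hv) hlv]
    rcases le_total ((u - u m • l) z) 0 with hz | hz
    · exact ⟨u - u m • l, by simpa [hlx] using hux, by simp [h1], hV, hz⟩
    · exact ⟨-(u - u m • l), by simpa [hlx] using hux, by simp [h1],
        fun v hv hlv => by rw [LinearMap.neg_apply, hV v hv hlv, neg_zero], by simpa using hz⟩
  refine ⟨w, hwm, hwV, hwz, ?_⟩
  by_contra! hw
  obtain ⟨v, hv, hwv⟩ : ∃ v ∈ V, w v ≠ 0 := by
    by_contra! hzero
    have hker : Submodule.span ℝ (C : Set E) ≤ LinearMap.ker w :=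
      (span_hull _).trans_le (Submodule.span_le.2 hzero)
    exact hwx (hker hxC)
  exact (hm.pos (fun _ => nonneg_of_mem_hull hw) (PointedCone.subset_hull hv) hwv).ne' hwm

lemma exists_isFacetFunctional_neg {V : Finset E}
    (hm : IsConeInterior (PointedCone.hull ℝ (V : Set E)) m) (h0 : ∀ v ∈ V, 0 ≤ l v) (h1 : l m = 1)
    {z : E} (hz : l z < 0) :
    ∃ l' : E →ₗ[ℝ] ℝ, IsFacetFunctional (PointedCone.hull ℝ (V : Set E)) m l' ∧ l' z < 0 := by
  classical
  induction hn : {v ∈ V | l v ≠ 0}.card using Nat.strong_induction_on generalizing l with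
  | _ n ih =>
  by_cases hl : IsFacetFunctional (PointedCone.hull ℝ (V : Set E)) m l
  · exact ⟨l, hl, hz⟩
  obtain ⟨w, hwm, hwV, hwz, hw⟩ := exists_direction hm h0 h1 hl z
  obtain ⟨t, ht, htV, v₀, hv₀, hwv₀, htv₀⟩ := exists_ratio V h0 hw
  refine ih _ ?_ (l := l + t • w) htV (by simp [h1, hwm]) ?_ rfl
  · rw [← hn]
    refine Finset.card_lt_card (Finset.ssubset_iff_of_subset ?_ |>.2 ⟨v₀, ?_, ?_⟩)
    · exact Finset.monotone_filter_right V fun v hv hlv hlv0 => hlv (by simp [hlv0, hwV v hv])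
    · exact Finset.mem_filter.2 ⟨hv₀, fun h => hwv₀.ne (hwV v₀ hv₀ h)⟩
    · simpa [hv₀] using htv₀
  · exact add_neg_of_neg_of_nonpos hz (mul_nonpos_of_nonneg_of_nonpos ht hwz)

/-- `m` is a Gorenstein point of the cone `C` with respect to the lattice `Λ`: an interior lattice
point at lattice distance one from every facet of `C`. -/
structure IsGorensteinPoint (C : PointedCone ℝ E) (Λ : AddSubgroup E) (m : E) : Prop where
  isConeInterior : IsConeInterior C m
  mem : m ∈ Λ
  integral : ∀ l : E →ₗ[ℝ] ℝ, IsFacetFunctional C m l → ∀ y ∈ Λ, ∃ k : ℤ, l y = k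

lemma IsGorensteinPoint.apply_le {V : Finset E} {Λ : AddSubgroup E}
    (hm : IsGorensteinPoint (PointedCone.hull ℝ (V : Set E)) Λ m) {y : E}
    (hy : IsConeInterior (PointedCone.hull ℝ (V : Set E)) y) (hyΛ : y ∈ Λ)
    (h0 : ∀ v ∈ V, 0 ≤ l v) : l m ≤ l y := by
  have hC : ∀ z ∈ PointedCone.hull ℝ (V : Set E), 0 ≤ l z := fun _ => nonneg_of_mem_hull h0
  by_contra! hlt
  have hpos : 0 < l m := (hC y hy.mem).trans_lt hlt
  obtain ⟨l', hl', hneg⟩ : ∃ l' : E →ₗ[ℝ] ℝ,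
      IsFacetFunctional (PointedCone.hull ℝ (V : Set E)) m l' ∧ l' (y - m) < 0 := by
    refine exists_isFacetFunctional_neg hm.isConeInterior (l := (l m)⁻¹ • l)
      (fun v hv => mul_nonneg (inv_nonneg.2 hpos.le) (h0 v hv)) (inv_mul_cancel₀ hpos.ne') ?_
    rw [LinearMap.smul_apply, map_sub]
    exact mul_neg_of_pos_of_neg (inv_pos.2 hpos) (sub_neg.2 hlt)
  obtain ⟨k, hk⟩ := hm.integral l' hl' y hyΛ
  have hl'y : 0 < l' y :=
    hy.pos hl'.nonneg hm.isConeInterior.mem (by rw [hl'.apply_eq_one]; exact one_ne_zero)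
  rw [map_sub, hl'.apply_eq_one, sub_neg] at hneg
  rw [hk] at hl'y hneg
  norm_cast at hl'y hneg
  omega

lemma IsGorensteinPoint.eq_of_apply_eq {V : Finset E} {Λ : AddSubgroup E}
    (hm : IsGorensteinPoint (PointedCone.hull ℝ (V : Set E)) Λ m) {y : E}
    (hy : IsConeInterior (PointedCone.hull ℝ (V : Set E)) y) (hyΛ : y ∈ Λ) {h : E →ₗ[ℝ] ℝ}
    (hpos : ∀ v ∈ V, 0 < h v) (heq : h y = h m) : y = m := by
  have apply_le (w : E →ₗ[ℝ] ℝ) : w m ≤ w y := by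
    obtain ⟨K, hK⟩ := (V.image fun v => -w v / h v).exists_le
    have hw : (w + K • h) m ≤ (w + K • h) y := by
      refine hm.apply_le hy hyΛ fun v hv => ?_
      have := (div_le_iff₀ (hpos v hv)).1 (hK _ (Finset.mem_image_of_mem _ hv))
      simp only [LinearMap.add_apply, LinearMap.smul_apply, smul_eq_mul]
      linarith
    simpa [heq] using hw
  refine sub_eq_zero.1 ((Module.forall_dual_apply_eq_zero_iff ℝ _).1 fun w => ?_)
  have h₁ := apply_le w
  have h₂ := apply_le (-w)
  simp only [LinearMap.neg_apply] at h₂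
  rw [map_sub]
  linarith

lemma isFacetFunctional_inv_smul_of_apex {s : Set E} {e : E}
    (hm : IsConeInterior (PointedCone.hull ℝ (insert e s)) m) {π : E →ₗ[ℝ] ℝ} (hπe : π e = 1)
    (hπs : ∀ z ∈ s, π z = 0) :
    0 < π m ∧ IsFacetFunctional (PointedCone.hull ℝ (insert e s)) m ((π m)⁻¹ • π) := by
  set C := PointedCone.hull ℝ (insert e s)
  have nonneg : ∀ z ∈ C, 0 ≤ π z := by
    refine fun _ => nonneg_of_mem_hull ?_
    rintro v (rfl | hv)
    exacts [hπe ▸ zero_le_one, (hπs v hv).ge]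
  have hpos : 0 < π m :=
    hm.pos nonneg (PointedCone.subset_hull (s.mem_insert e)) (hπe ▸ one_ne_zero)
  refine ⟨hpos, fun z hz => mul_nonneg (inv_nonneg.2 hpos.le) (nonneg z hz),
    inv_mul_cancel₀ hpos.ne', ?_⟩
  rintro x ⟨hx, hπx⟩
  have hx : x ∈ Submodule.span ℝ (insert e s) := (span_hull _).le hx
  have hπx : π x = 0 := by simpa [hpos.ne'] using hπx
  obtain ⟨t, y, hy, rfl⟩ := Submodule.mem_span_insert.1 hx
  have hπy : π y = 0 := (Submodule.span_le.2 hπs : Submodule.span ℝ s ≤ LinearMap.ker π) hy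
  obtain rfl : t = 0 := by simpa [hπe, hπy] using hπx
  rw [zero_smul, zero_add]
  refine Submodule.span_mono (fun z hz => ?_) hy
  exact ⟨PointedCone.subset_hull (s.mem_insert_of_mem e hz), by simp [hπs z hz]⟩

lemma IsGorensteinPoint.isFacetFunctional_of_apex {s : Set E} {e : E} {Λ : AddSubgroup E}
    (hm : IsGorensteinPoint (PointedCone.hull ℝ (insert e s)) Λ m) (he : e ∈ Λ)
    {π : E →ₗ[ℝ] ℝ} (hπe : π e = 1) (hπs : ∀ z ∈ s, π z = 0) (hπΛ : ∀ y ∈ Λ, ∃ k : ℤ, π y = k) :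
    IsFacetFunctional (PointedCone.hull ℝ (insert e s)) m π := by
  obtain ⟨hpos, hπ⟩ := isFacetFunctional_inv_smul_of_apex hm.isConeInterior hπe hπs
  obtain ⟨k, hk⟩ := hm.integral _ hπ e he
  obtain ⟨j, hj⟩ := hπΛ m hm.mem
  have hk : (π m)⁻¹ = k := by simpa [hπe] using hk
  have hjk : j * k = 1 := by
    have : (j : ℝ) * k = 1 := by rw [← hj, ← hk, mul_inv_cancel₀ hpos.ne']
    exact_mod_cast this
  have hj0 : 0 ≤ j := by exact_mod_cast hj ▸ hpos.le
  have hπm : π m = 1 := by rw [hj, Int.eq_one_of_mul_eq_one_right hj0 hjk, Int.cast_one]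
  simpa [hπm] using hπ

section Join

variable {E₁ E₂ : Type*} [AddCommGroup E₁] [Module ℝ E₁] [AddCommGroup E₂] [Module ℝ E₂]
  {C₁ : PointedCone ℝ E₁} {C₂ : PointedCone ℝ E₂} {f : E₁ →ₗ[ℝ] E} {g : E₂ →ₗ[ℝ] E}
  {m₁ : E₁} {m₂ : E₂} {l : E₁ →ₗ[ℝ] ℝ} {ρ : E →ₗ[ℝ] E₁}

lemma exists_retraction (f : E₁ →ₗ[ℝ] E) (g : E₂ →ₗ[ℝ] E) (S₁ : Submodule ℝ E₁)
    (S₂ : Submodule ℝ E₂) [FiniteDimensional ℝ S₁] [FiniteDimensional ℝ S₂]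
    (h : Module.finrank ℝ (S₁.map f ⊔ S₂.map g : Submodule ℝ E) =
      Module.finrank ℝ S₁ + Module.finrank ℝ S₂) :
    ∃ ρ : E →ₗ[ℝ] E₁, (∀ z ∈ S₁, ρ (f z) = z) ∧ ∀ z ∈ S₂, ρ (g z) = 0 := by
  let φ : S₁ × S₂ →ₗ[ℝ] E := (f.domRestrict S₁).coprod (g.domRestrict S₂)
  have hker : LinearMap.ker φ = ⊥ := by
    have hrange : LinearMap.range φ = S₁.map f ⊔ S₂.map g := by
      rw [LinearMap.range_coprod, LinearMap.range_domRestrict, LinearMap.range_domRestrict]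
    have := φ.finrank_range_add_finrank_ker
    rw [hrange, h, Module.finrank_prod] at this
    exact Submodule.finrank_eq_zero.1 (by omega)
  obtain ⟨ψ, hψ⟩ := φ.exists_leftInverse_of_injective hker
  refine ⟨S₁.subtype ∘ₗ LinearMap.fst ℝ S₁ S₂ ∘ₗ ψ, fun z hz => ?_, fun z hz => ?_⟩
  · have : ψ (f z) = (⟨z, hz⟩, 0) := by simpa [φ] using LinearMap.congr_fun hψ (⟨z, hz⟩, 0)
    simp [this]
  · have : ψ (g z) = (0, ⟨z, hz⟩) := by simpa [φ] using LinearMap.congr_fun hψ (0, ⟨z, hz⟩)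
    simp [this]

lemma span_map_sup_map (f : E₁ →ₗ[ℝ] E) (g : E₂ →ₗ[ℝ] E) (C₁ : PointedCone ℝ E₁)
    (C₂ : PointedCone ℝ E₂) :
    Submodule.span ℝ ((C₁.map f ⊔ C₂.map g : PointedCone ℝ E) : Set E) =
      (Submodule.span ℝ (C₁ : Set E₁)).map f ⊔ (Submodule.span ℝ (C₂ : Set E₂)).map g := by
  rw [Submodule.map_span, Submodule.map_span, ← Submodule.span_union, ← span_hull (_ ∪ _),
    PointedCone.hull, Submodule.span_union, ← PointedCone.coe_map, ← PointedCone.coe_map,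
    Submodule.span_eq, Submodule.span_eq]

lemma IsFacetFunctional.comp_retraction (hl : IsFacetFunctional C₁ m₁ l) (hm₁ : m₁ ∈ C₁)
    (hm₂ : m₂ ∈ C₂) (hρf : ∀ z ∈ Submodule.span ℝ (C₁ : Set E₁), ρ (f z) = z)
    (hρg : ∀ z ∈ Submodule.span ℝ (C₂ : Set E₂), ρ (g z) = 0) :
    IsFacetFunctional (C₁.map f ⊔ C₂.map g) (f m₁ + g m₂) (l ∘ₗ ρ) := by
  have hρ {a : E₁} {b : E₂} (ha : a ∈ Submodule.span ℝ (C₁ : Set E₁))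
      (hb : b ∈ Submodule.span ℝ (C₂ : Set E₂)) : (l ∘ₗ ρ) (f a + g b) = l a := by
    simp [hρf a ha, hρg b hb]
  refine ⟨?_, ?_, ?_⟩
  · intro z hz
    obtain ⟨_, ⟨a, ha, rfl⟩, _, ⟨b, hb, rfl⟩, rfl⟩ := Submodule.mem_sup.1 hz
    exact (hl.nonneg a ha).trans_eq (hρ (Submodule.subset_span ha) (Submodule.subset_span hb)).symm
  · rw [hρ (Submodule.subset_span hm₁) (Submodule.subset_span hm₂), hl.apply_eq_one]
  · rintro x ⟨hx, hlx⟩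
    rw [span_map_sup_map] at hx
    obtain ⟨_, ⟨a, ha, rfl⟩, _, ⟨b, hb, rfl⟩, rfl⟩ := Submodule.mem_sup.1 hx
    have hla : l a = 0 := (hρ ha hb).symm.trans hlx
    refine Submodule.add_mem _ ?_ ?_
    · refine Submodule.span_le (p := (Submodule.span ℝ _).comap f) |>.2 ?_ (hl.ker_le ⟨ha, hla⟩)
      rintro z ⟨hz, hlz⟩
      refine Submodule.subset_span ⟨Submodule.mem_sup_left ⟨z, hz, rfl⟩, ?_⟩
      rw [LinearMap.comp_apply, hρf z (Submodule.subset_span hz), hlz]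
    · refine Submodule.span_le (p := (Submodule.span ℝ _).comap g) |>.2 (fun z hz => ?_) hb
      refine Submodule.subset_span ⟨Submodule.mem_sup_right ⟨z, hz, rfl⟩, ?_⟩
      rw [LinearMap.comp_apply, hρg z (Submodule.subset_span hz), map_zero]

lemma IsGorensteinPoint.of_join {Λ : AddSubgroup E} {Λ₁ : AddSubgroup E₁}
    (hm : IsGorensteinPoint (C₁.map f ⊔ C₂.map g) Λ (f m₁ + g m₂)) (hm₁ : IsConeInterior C₁ m₁)
    (hm₁Λ : m₁ ∈ Λ₁) (hm₂ : m₂ ∈ C₂) (hΛ₁ : ∀ y ∈ Λ₁, y ∈ Submodule.span ℝ (C₁ : Set E₁))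
    (hf : ∀ y ∈ Λ₁, f y ∈ Λ) (hρf : ∀ z ∈ Submodule.span ℝ (C₁ : Set E₁), ρ (f z) = z)
    (hρg : ∀ z ∈ Submodule.span ℝ (C₂ : Set E₂), ρ (g z) = 0) :
    IsGorensteinPoint C₁ Λ₁ m₁ where
  isConeInterior := hm₁
  mem := hm₁Λ
  integral l hl y hy := by
    obtain ⟨k, hk⟩ := hm.integral _ (hl.comp_retraction hm₁.mem hm₂ hρf hρg) (f y) (hf y hy)
    exact ⟨k, by rwa [LinearMap.comp_apply, hρf y (hΛ₁ y hy)] at hk⟩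

end Join

end Cones

section Homogenization

variable {E F : Type*} [AddCommGroup E] [Module ℝ E] [AddCommGroup F] [Module ℝ F]
  {P Q : Set E} {r : ℝ}

/-- The homogenization of `P ⊆ E`: the cone in `E × ℝ` spanned by the copy of `P` at height `1`.
Its slice at height `r > 0` is `r • P` when `P` is convex. -/
def coneOver (P : Set E) : PointedCone ℝ (E × ℝ) :=
  PointedCone.hull ℝ ((fun p => (p, (1 : ℝ))) '' P)

lemma mem_coneOver (hP : Convex ℝ P) (hne : P.Nonempty) {z : E × ℝ} :
    z ∈ coneOver P ↔ 0 ≤ z.2 ∧ z.1 ∈ z.2 • P := by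
  constructor
  · intro hz
    induction hz using Submodule.span_induction with
    | mem z hz =>
      obtain ⟨p, hp, rfl⟩ := hz
      simpa using hp
    | zero => simp [Set.zero_smul_set hne]
    | add y z _ _ hy hz =>
      refine ⟨add_nonneg hy.1 hz.1, ?_⟩
      rw [Prod.fst_add, Prod.snd_add, hP.add_smul hy.1 hz.1]
      exact Set.add_mem_add hy.2 hz.2
    | smul c z _ hz =>
      refine ⟨mul_nonneg c.2 hz.1, ?_⟩
      rw [Prod.smul_fst, Prod.smul_snd, smul_assoc]
      exact Set.smul_mem_smul_set hz.2
  · rintro ⟨hz, p, hp, hpz⟩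
    have hz' : z = z.2 • (p, (1 : ℝ)) := by
      ext <;> simp [← hpz]
    rw [hz']
    exact (coneOver P).smul_mem hz (PointedCone.subset_hull ⟨p, hp, rfl⟩)

lemma mk_mem_coneOver (hP : Convex ℝ P) (hne : P.Nonempty) (hr : 0 ≤ r) {p : E} :
    (p, r) ∈ coneOver P ↔ p ∈ r • P := by
  simp [mem_coneOver hP hne, hr]

lemma snd_pos_of_mem_coneOver (hP : Convex ℝ P) (hne : P.Nonempty) {z : E × ℝ}
    (hz : z ∈ coneOver P) (hz0 : z ≠ 0) : 0 < z.2 := by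
  obtain ⟨h0, hz1⟩ := (mem_coneOver hP hne).1 hz
  refine h0.lt_of_ne' fun h => hz0 ?_
  rw [h, Set.zero_smul_set hne] at hz1
  exact Prod.ext hz1 h

lemma coneOver_convexHull (P : Set E) : coneOver (convexHull ℝ P) = coneOver P := by
  refine le_antisymm (Submodule.span_le.2 ?_)
    (Submodule.span_mono (Set.image_mono (subset_convexHull ℝ P)))
  have convex_slice : Convex ℝ {p : E | (p, (1 : ℝ)) ∈ coneOver P} := by
    intro p hp q hq a b ha hb hab
    have : (a • p + b • q, (1 : ℝ)) = a • (p, (1 : ℝ)) + b • (q, (1 : ℝ)) := by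
      ext <;> simp [hab]
    rw [Set.mem_ofPred_eq, this]
    exact add_mem ((coneOver P).smul_mem ha hp) ((coneOver P).smul_mem hb hq)
  rintro _ ⟨p, hp, rfl⟩
  have subset_slice : P ⊆ {p : E | (p, (1 : ℝ)) ∈ coneOver P} := fun q hq =>
    PointedCone.subset_hull (Set.mem_image_of_mem _ hq)
  exact convexHull_min subset_slice convex_slice hp

lemma coneOver_union (P Q : Set E) : coneOver (P ∪ Q) = coneOver P ⊔ coneOver Q := by
  rw [coneOver, Set.image_union, PointedCone.hull, Submodule.span_union]
  rfl

/-- The linear map on `E × ℝ` whose restriction to the affine hyperplane `E × {r}` is `a`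
(for `r ≠ 0`). -/
noncomputable def extendFromHeight (r : ℝ) (a : E →ᵃ[ℝ] F) : E × ℝ →ₗ[ℝ] F :=
  a.linear.coprod (LinearMap.toSpanSingleton ℝ F (r⁻¹ • a 0))

lemma extendFromHeight_apply (hr : r ≠ 0) (a : E →ᵃ[ℝ] F) (p : E) :
    extendFromHeight r a (p, r) = a p := by
  simp [extendFromHeight, smul_smul, hr, congrFun a.decomp p]

/-- The linear map `E × ℝ → F × ℝ` preserving heights and restricting to `a` at height `1`. -/
noncomputable def homogenize (a : E →ᵃ[ℝ] F) : E × ℝ →ₗ[ℝ] F × ℝ :=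
  (extendFromHeight 1 a).prod (LinearMap.snd ℝ E ℝ)

lemma homogenize_apply_one (a : E →ᵃ[ℝ] F) (p : E) : homogenize a (p, 1) = (a p, 1) := by
  simp [homogenize, extendFromHeight_apply]

lemma snd_homogenize (a : E →ᵃ[ℝ] F) (z : E × ℝ) : (homogenize a z).2 = z.2 := rfl

lemma map_homogenize_coneOver (a : E →ᵃ[ℝ] F) (P : Set E) :
    (coneOver P).map (homogenize a) = coneOver (a '' P) := by
  have himage : homogenize a '' ((fun p => (p, (1 : ℝ))) '' P) =
      (fun p => (p, (1 : ℝ))) '' (a '' P) := by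
    simp only [Set.image_image, homogenize_apply_one]
  rw [coneOver, coneOver, PointedCone.hull, PointedCone.map, Submodule.map_span, ← himage]
  rfl

lemma span_eq_span_slice {K : PointedCone ℝ (E × ℝ)} (hK : ∀ z ∈ K, z ≠ 0 → 0 < z.2)
    (hr : 0 < r) :
    Submodule.span ℝ (K : Set (E × ℝ)) =
      Submodule.span ℝ ((fun p => (p, r)) '' {p | (p, r) ∈ K}) := by
  refine le_antisymm (Submodule.span_le.2 fun z hz => ?_)
    (Submodule.span_mono (Set.image_subset_iff.2 subset_rfl))
  rcases eq_or_ne z 0 with rfl | hz0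
  · exact Submodule.zero_mem _
  have hz2 : 0 < z.2 := hK z hz hz0
  have hscale : (r / z.2) • z = ((r / z.2) • z.1, r) := by
    ext <;> simp [hz2.ne']
  have hmem : ((r / z.2) • z.1, r) ∈ K := hscale ▸ K.smul_mem (by positivity) hz
  have hz' : z = (z.2 / r) • ((r / z.2) • z.1, r) := by
    rw [← hscale, smul_smul, div_mul_div_cancel₀ hr.ne', div_self hz2.ne', one_smul]
  rw [hz']
  exact Submodule.smul_mem _ _ (Submodule.subset_span ⟨_, hmem, rfl⟩)

lemma span_coneOver (hP : Convex ℝ P) (hne : P.Nonempty) (hr : 0 < r) :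
    Submodule.span ℝ (coneOver P : Set (E × ℝ)) =
      Submodule.span ℝ ((fun p => (p, r)) '' (r • P)) := by
  rw [span_eq_span_slice (fun z => snd_pos_of_mem_coneOver hP hne) hr]
  simp only [mk_mem_coneOver hP hne hr.le, Set.ofPred_mem_eq]

section Slice

variable {X : Set E} {k : ℝ}

lemma mem_span_slice {p₀ : E} (hp₀ : p₀ ∈ X) {z : E × ℝ} :
    z ∈ Submodule.span ℝ ((fun p => (p, k)) '' X) ↔
      ∃ t : ℝ, ∃ d ∈ vectorSpan ℝ X, z = (t • p₀ + d, t * k) := by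
  constructor
  · intro hz
    induction hz using Submodule.span_induction with
    | mem z hz =>
      obtain ⟨p, hp, rfl⟩ := hz
      exact ⟨1, p - p₀, vsub_mem_vectorSpan ℝ hp hp₀, by simp⟩
    | zero => exact ⟨0, 0, zero_mem _, by simp [Prod.ext_iff]⟩
    | add y z _ _ hy hz =>
      obtain ⟨s, d, hd, rfl⟩ := hy
      obtain ⟨t, e, he, rfl⟩ := hz
      refine ⟨s + t, d + e, add_mem hd he, Prod.ext ?_ (add_mul s t k).symm⟩
      simp only [Prod.fst_add, add_smul]
      abel
    | smul c z _ hz =>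
      obtain ⟨t, d, hd, rfl⟩ := hz
      exact ⟨c * t, c • d, Submodule.smul_mem _ c hd, by simp [mul_smul, mul_assoc]⟩
  · rintro ⟨t, d, hd, rfl⟩
    have hp₀ : (p₀, k) ∈ Submodule.span ℝ ((fun p => (p, k)) '' X) :=
      Submodule.subset_span ⟨p₀, hp₀, rfl⟩
    have hd : (d, (0 : ℝ)) ∈ Submodule.span ℝ ((fun p => (p, k)) '' X) := by
      induction hd using Submodule.span_induction with
      | mem d hd =>
        obtain ⟨p, hp, q, hq, rfl⟩ := hd
        simpa using sub_mem (Submodule.subset_span (R := ℝ) (Set.mem_image_of_mem (·, k) hp))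
          (Submodule.subset_span (Set.mem_image_of_mem (·, k) hq))
      | zero => exact zero_mem _
      | add d e _ _ hd he => simpa using add_mem hd he
      | smul c d _ hd => simpa using Submodule.smul_mem _ c hd
    simpa using add_mem (Submodule.smul_mem _ t hp₀) hd

lemma mk_mem_span_slice (hX : X.Nonempty) (hk : k ≠ 0) {y : E} :
    (y, k) ∈ Submodule.span ℝ ((fun p => (p, k)) '' X) ↔ y ∈ affineSpan ℝ X := by
  obtain ⟨p₀, hp₀⟩ := hX
  rw [mem_span_slice hp₀, ← AffineSubspace.vsub_right_mem_direction_iff_mem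
    (mem_affineSpan ℝ hp₀), direction_affineSpan, vsub_eq_sub]
  constructor
  · rintro ⟨t, d, hd, h⟩
    obtain ⟨rfl, ht⟩ := Prod.ext_iff.1 h
    obtain rfl : t = 1 := mul_right_cancel₀ hk (by simpa using ht.symm)
    simpa using hd
  · exact fun h => ⟨1, y - p₀, h, by simp⟩

lemma finrank_inf_ker_add_one (S : Submodule ℝ E) [FiniteDimensional ℝ S] {l : E →ₗ[ℝ] ℝ} {m : E}
    (hm : m ∈ S) (hlm : l m ≠ 0) :
    Module.finrank ℝ (S ⊓ LinearMap.ker l : Submodule ℝ E) + 1 = Module.finrank ℝ S := by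
  have hl : l.domRestrict S ≠ 0 := fun h => hlm (LinearMap.congr_fun h ⟨m, hm⟩)
  rw [← Module.Dual.finrank_ker_add_one_of_ne_zero hl, ← Submodule.map_comap_subtype,
    Submodule.finrank_map_subtype_eq]
  rfl

lemma finrank_span_slice [FiniteDimensional ℝ E] (hX : X.Nonempty) (hk : k ≠ 0) :
    Module.finrank ℝ (Submodule.span ℝ ((fun p => (p, k)) '' X)) =
      Module.finrank ℝ (affineSpan ℝ X).direction + 1 := by
  obtain ⟨p₀, hp₀⟩ := hX
  have hinf : Submodule.span ℝ ((fun p => (p, k)) '' X) ⊓ LinearMap.ker (LinearMap.snd ℝ E ℝ) =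
      (vectorSpan ℝ X).map (LinearMap.inl ℝ E ℝ) := by
    ext z
    simp only [Submodule.mem_inf, mem_span_slice hp₀, LinearMap.mem_ker, LinearMap.snd_apply,
      Submodule.mem_map, LinearMap.inl_apply]
    constructor
    · rintro ⟨⟨t, d, hd, rfl⟩, ht⟩
      obtain rfl : t = 0 := (mul_eq_zero.1 ht).resolve_right hk
      exact ⟨d, hd, by simp⟩
    · rintro ⟨d, hd, rfl⟩
      exact ⟨⟨0, d, hd, by simp⟩, rfl⟩
  have hsnd : (LinearMap.snd ℝ E ℝ) (p₀, k) ≠ 0 := hk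
  rw [← finrank_inf_ker_add_one _ (Submodule.subset_span (Set.mem_image_of_mem _ hp₀)) hsnd, hinf,
    ← (Submodule.equivMapOfInjective _ LinearMap.inl_injective _).finrank_eq, direction_affineSpan]

end Slice

end Homogenization

section RelativeInterior

open Filter Topology

variable {E : Type*} [NormedAddCommGroup E] [NormedSpace ℝ E] {X P : Set E} {x : E} {r : ℝ}

lemma mem_intrinsicInterior_iff_mem_nhdsWithin :
    x ∈ intrinsicInterior ℝ X ↔ x ∈ affineSpan ℝ X ∧ X ∈ 𝓝[affineSpan ℝ X] x := by
  constructor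
  · rintro ⟨y, hy, rfl⟩
    exact ⟨y.2, preimage_coe_mem_nhds_subtype.1 (mem_interior_iff_mem_nhds.1 hy)⟩
  · rintro ⟨hx, h⟩
    exact ⟨⟨x, hx⟩, mem_interior_iff_mem_nhds.2 (preimage_coe_mem_nhds_subtype.2 h), rfl⟩

lemma exists_lineMap_mem_of_mem_intrinsicInterior (hx : x ∈ intrinsicInterior ℝ X) {b : E}
    (hb : b ∈ X) : ∃ ε : ℝ, 0 < ε ∧ AffineMap.lineMap x b (-ε) ∈ X := by
  obtain ⟨hxS, hX⟩ := mem_intrinsicInterior_iff_mem_nhdsWithin.1 hx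
  have hline : Tendsto (fun ε : ℝ => AffineMap.lineMap x b (-ε)) (𝓝[>] 0)
      (𝓝[affineSpan ℝ X] x) := by
    have hcont : Continuous fun ε : ℝ => AffineMap.lineMap x b (-ε) := by fun_prop
    refine tendsto_nhdsWithin_iff.2 ⟨?_, Eventually.of_forall fun ε =>
      AffineMap.lineMap_mem _ hxS (subset_affineSpan ℝ X hb)⟩
    simpa using (hcont.tendsto 0).mono_left nhdsWithin_le_nhds
  obtain ⟨ε, hε, hε0⟩ := ((hline.eventually hX).and self_mem_nhdsWithin).exists
  exact ⟨ε, hε0, hε⟩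

lemma mem_intrinsicInterior_of_lineMap_mem (hX : Convex ℝ X) {b : E}
    (hb : b ∈ intrinsicInterior ℝ X) {ε : ℝ} (hε : 0 < ε) (h : AffineMap.lineMap x b (-ε) ∈ X) :
    x ∈ intrinsicInterior ℝ X := by
  obtain ⟨-, hnhds⟩ := mem_intrinsicInterior_iff_mem_nhdsWithin.1 hb
  set c := AffineMap.lineMap x b (-ε) with hc
  have hcS : c ∈ affineSpan ℝ X := subset_affineSpan ℝ X h
  -- The homothety with centre `c` taking `x` to `b` pulls a neighbourhood of `b` inside `X` back
  -- to a neighbourhood of `x`, which lies in `X` by convexity.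
  have hx : AffineMap.lineMap c x ((1 + ε) / ε) = b := by
    rw [hc, AffineMap.lineMap_apply_module, AffineMap.lineMap_apply_module]
    match_scalars <;> field_simp <;> ring
  have mem_of_homothety {y : E} (hy : AffineMap.lineMap c y ((1 + ε) / ε) ∈ X) : y ∈ X := by
    have hcomb : y = (1 + ε)⁻¹ • c + (ε / (1 + ε)) • AffineMap.lineMap c y ((1 + ε) / ε) := by
      rw [AffineMap.lineMap_apply_module]
      match_scalars <;> field_simp
      ring
    rw [hcomb]
    exact hX h hy (by positivity) (by positivity) (by field_simp)
  have hcont : Continuous fun y : E => AffineMap.lineMap c y ((1 + ε) / ε) := by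
    simp only [AffineMap.lineMap_apply_module]
    fun_prop
  have htendsto : Tendsto (fun y => AffineMap.lineMap c y ((1 + ε) / ε)) (𝓝[affineSpan ℝ X] x)
      (𝓝[affineSpan ℝ X] b) := by
    refine tendsto_nhdsWithin_iff.2 ⟨hx ▸ (hcont.tendsto x).mono_left nhdsWithin_le_nhds, ?_⟩
    exact eventually_mem_nhdsWithin.mono fun y hy => AffineMap.lineMap_mem _ hcS hy
  refine mem_intrinsicInterior_iff_mem_nhdsWithin.2 ⟨subset_affineSpan ℝ X ?_, ?_⟩
  · exact mem_of_homothety (hx ▸ intrinsicInterior_subset hb)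
  · exact (htendsto.eventually hnhds).mono fun y hy => mem_of_homothety hy

lemma mem_intrinsicInterior_iff [FiniteDimensional ℝ E] (hX : Convex ℝ X) :
    x ∈ intrinsicInterior ℝ X ↔
      x ∈ X ∧ ∀ b ∈ X, ∃ ε : ℝ, 0 < ε ∧ AffineMap.lineMap x b (-ε) ∈ X := by
  refine ⟨fun hx => ⟨intrinsicInterior_subset hx, fun b =>
    exists_lineMap_mem_of_mem_intrinsicInterior hx⟩, fun ⟨hx, h⟩ => ?_⟩
  obtain ⟨b, hb⟩ := Set.Nonempty.intrinsicInterior hX ⟨x, hx⟩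
  obtain ⟨ε, hε, hmem⟩ := h b (intrinsicInterior_subset hb)
  exact mem_intrinsicInterior_of_lineMap_mem hX hb hε hmem

lemma isConeInterior_coneOver_iff [FiniteDimensional ℝ E] (hP : Convex ℝ P) (hne : P.Nonempty)
    (hr : 0 < r) : IsConeInterior (coneOver P) (x, r) ↔ x ∈ intrinsicInterior ℝ (r • P) := by
  have hmem {y : E} : (y, r) ∈ coneOver P ↔ y ∈ r • P := mk_mem_coneOver hP hne hr.le
  rw [mem_intrinsicInterior_iff (hP.smul r)]
  constructor
  · intro h
    refine ⟨hmem.1 h.mem, fun b hb => ?_⟩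
    obtain ⟨ε, hε, hεC⟩ := h (b, r) (hmem.2 hb)
    refine ⟨ε, hε, hmem.1 ?_⟩
    have : (AffineMap.lineMap x b (-ε), r) = ((x, r) - ε • (b, r)) + ε • (x, r) := by
      rw [AffineMap.lineMap_apply_module]
      exact Prod.ext (by dsimp; module) (by simp)
    rw [this]
    exact add_mem hεC ((coneOver P).smul_mem hε.le h.mem)
  · rintro ⟨hx, h⟩
    refine isConeInterior_hull (hmem.2 hx) ?_
    rintro _ ⟨p, hp, rfl⟩
    obtain ⟨ε, hε, hεP⟩ := h (r • p) (Set.smul_mem_smul_set hp)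
    refine ⟨r * ε / (1 + ε), by positivity, ?_⟩
    have : (x, r) - (r * ε / (1 + ε)) • (p, (1 : ℝ)) =
        (1 + ε)⁻¹ • (AffineMap.lineMap x (r • p) (-ε), r) := by
      rw [AffineMap.lineMap_apply_module]
      refine Prod.ext ?_ ?_
      · dsimp
        match_scalars <;> field_simp
        ring
      · dsimp
        field_simp
        ring
    rw [this]
    exact (coneOver P).smul_mem (by positivity) (hmem.2 hεP)

end RelativeInterior

section Lattice

variable {N n : ℕ} {P : Set (Fin N → ℝ)} {F : Set (Fin n → ℝ)} {α : (Fin n → ℝ) →ᵃ[ℝ] (Fin N → ℝ)}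

/-- The lattice of the cone over `P`: the integral points of `ℝ^N × ℝ` in its linear span. -/
def latticeOver (P : Set (Fin N → ℝ)) : AddSubgroup ((Fin N → ℝ) × ℝ) :=
  (Submodule.span ℝ (coneOver P : Set ((Fin N → ℝ) × ℝ))).toAddSubgroup ⊓
    (AddSubgroup.pi Set.univ fun _ => (Int.castAddHom ℝ).range).prod (Int.castAddHom ℝ).range

lemma mem_latticeOver {z : (Fin N → ℝ) × ℝ} :
    z ∈ latticeOver P ↔ z ∈ Submodule.span ℝ (coneOver P : Set ((Fin N → ℝ) × ℝ)) ∧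
      IsLatticePt z.1 ∧ ∃ k : ℤ, z.2 = k := by
  simp [latticeOver, AddSubgroup.mem_inf, AddSubgroup.mem_prod, AddSubgroup.mem_pi, IsLatticePt,
    AddSubgroup.mem_zmultiples_iff, eq_comm]

lemma mk_mem_latticeOver (hP : Convex ℝ P) (hne : P.Nonempty) {r : ℕ} (hr : 0 < r)
    {y : Fin N → ℝ} :
    (y, (r : ℝ)) ∈ latticeOver P ↔ y ∈ affineSpan ℝ ((r : ℝ) • P) ∧ IsLatticePt y := by
  have hr' : (0 : ℝ) < r := Nat.cast_pos.2 hr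
  rw [mem_latticeOver, span_coneOver hP hne hr', mk_mem_span_slice hne.smul_set hr'.ne']
  exact and_congr_right fun _ => and_iff_left ⟨r, by simp⟩

lemma mk_one_mem_latticeOver {v : Fin N → ℝ} (hv : v ∈ affineSpan ℝ P) (hvL : IsLatticePt v) :
    (v, (1 : ℝ)) ∈ latticeOver P := by
  refine mem_latticeOver.2 ⟨?_, hvL, 1, by simp⟩
  rw [coneOver, span_hull, mk_mem_span_slice ((affineSpan_nonempty ℝ).1 ⟨v, hv⟩) one_ne_zero]
  exact hv

/-- A lattice element of height `k` is a lattice element of height `1` plus `k - 1` copies of a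
lattice point of `P`. -/
lemma latticeOver_le {A : AddSubgroup ((Fin N → ℝ) × ℝ)} {p₀ : Fin N → ℝ} (hp₀ : p₀ ∈ P)
    (hp₀L : IsLatticePt p₀) (h : ∀ y ∈ affineSpan ℝ P, IsLatticePt y → (y, (1 : ℝ)) ∈ A) :
    latticeOver P ≤ A := by
  intro z hz
  have hp₀P : p₀ ∈ affineSpan ℝ P := subset_affineSpan ℝ P hp₀
  obtain ⟨k, hk⟩ := (mem_latticeOver.1 hz).2.2
  set w := z - (k - 1) • (p₀, (1 : ℝ)) with hw
  have hw2 : w = (w.1, (1 : ℝ)) := Prod.ext rfl (by simp [hw, hk])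
  have hwΛ : (w.1, (1 : ℝ)) ∈ latticeOver P := hw2 ▸ sub_mem hz
    (zsmul_mem (mk_one_mem_latticeOver hp₀P hp₀L) _)
  obtain ⟨hwS, hwL, -⟩ := mem_latticeOver.1 hwΛ
  rw [coneOver, span_hull, mk_mem_span_slice ⟨p₀, hp₀⟩ one_ne_zero] at hwS
  have hzw : z = w + (k - 1) • (p₀, (1 : ℝ)) := by rw [hw, sub_add_cancel]
  rw [hzw, hw2]
  exact add_mem (h _ hwS hwL) (zsmul_mem (h _ hp₀P hp₀L) _)

lemma exists_int_of_mem_latticeOver {p₀ : Fin N → ℝ} (hp₀ : p₀ ∈ P) (hp₀L : IsLatticePt p₀)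
    {l : (Fin N → ℝ) × ℝ →ₗ[ℝ] ℝ}
    (hl : ∀ y ∈ affineSpan ℝ P, IsLatticePt y → ∃ k : ℤ, l (y, 1) = k) {z : (Fin N → ℝ) × ℝ}
    (hz : z ∈ latticeOver P) : ∃ k : ℤ, l z = k := by
  have hle : latticeOver P ≤ (Int.castAddHom ℝ).range.comap l.toAddMonoidHom :=
    latticeOver_le hp₀ hp₀L fun y hy hyL => (hl y hy hyL).imp fun k hk => hk.symm
  exact (hle hz).imp fun k hk => hk.symm

/-- The affine map `α` takes the lattice points of the affine hull of `F` to lattice points. -/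
def PreservesLattice (α : (Fin n → ℝ) →ᵃ[ℝ] (Fin N → ℝ)) (F : Set (Fin n → ℝ)) : Prop :=
  ∀ y ∈ affineSpan ℝ F, IsLatticePt y → IsLatticePt (α y)

lemma PreservesLattice.homogenize_mem (hα : PreservesLattice α F) (hFP : α '' F ⊆ P)
    {p₀ : Fin n → ℝ} (hp₀ : p₀ ∈ F) (hp₀L : IsLatticePt p₀) {z : (Fin n → ℝ) × ℝ}
    (hz : z ∈ latticeOver F) : homogenize α z ∈ latticeOver P := by
  have hle : latticeOver F ≤ (latticeOver P).comap (homogenize α).toAddMonoidHom := by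
    refine latticeOver_le hp₀ hp₀L fun y hy hyL => ?_
    have hαy : α y ∈ affineSpan ℝ P :=
      affineSpan_mono ℝ hFP (AffineSubspace.map_span α F ▸ AffineSubspace.mem_map_of_mem α hy)
    have := mk_one_mem_latticeOver hαy (hα y hy hyL)
    rwa [← homogenize_apply_one] at this
  exact hle hz

end Lattice

section Facets

variable {N : ℕ} {P G : Set (Fin N → ℝ)} {r : ℝ} {x : Fin N → ℝ} {l : (Fin N → ℝ) × ℝ →ₗ[ℝ] ℝ}

lemma finrank_span_coneOver (hne : P.Nonempty) :
    Module.finrank ℝ (Submodule.span ℝ (coneOver P : Set ((Fin N → ℝ) × ℝ))) = polyDim P + 1 := by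
  rw [coneOver, span_hull, finrank_span_slice hne one_ne_zero, polyDim]

lemma polyDim_smul (hP : Convex ℝ P) (hne : P.Nonempty) (hr : 0 < r) :
    polyDim (r • P) = polyDim P := by
  have h := finrank_span_coneOver hne
  rw [span_coneOver hP hne hr, finrank_span_slice hne.smul_set hr.ne'] at h
  exact Nat.succ_injective h

lemma span_face_eq (hP : Convex ℝ P) (hne : P.Nonempty) (hr : 0 < r)
    (l : (Fin N → ℝ) × ℝ →ₗ[ℝ] ℝ) :
    Submodule.span ℝ {z ∈ coneOver P | l z = 0} =
      Submodule.span ℝ ((fun p => (p, r)) '' {p ∈ r • P | l (p, r) = 0}) := by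
  have hK : ∀ z ∈ coneOver P ⊓ PointedCone.ofSubmodule (LinearMap.ker l), z ≠ 0 → 0 < z.2 :=
    fun z hz => snd_pos_of_mem_coneOver hP hne hz.1
  have hslice : {p | (p, r) ∈ coneOver P ⊓ PointedCone.ofSubmodule (LinearMap.ker l)} =
      {p ∈ r • P | l (p, r) = 0} := by
    ext p
    exact and_congr_left' (mk_mem_coneOver hP hne hr.le)
  rw [← hslice, ← span_eq_span_slice hK hr]
  rfl

lemma finrank_span_inf_ker (hne : P.Nonempty) (hx : (x, r) ∈ coneOver P)
    (hl : l (x, r) ≠ 0) :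
    Module.finrank ℝ (Submodule.span ℝ (coneOver P : Set ((Fin N → ℝ) × ℝ)) ⊓ LinearMap.ker l :
      Submodule ℝ ((Fin N → ℝ) × ℝ)) = polyDim P := by
  have h := finrank_inf_ker_add_one _ (Submodule.subset_span hx) hl
  rw [finrank_span_coneOver hne] at h
  exact Nat.succ_injective h

lemma isExposed_slice (hP : Convex ℝ P) (hne : P.Nonempty) (hr : 0 ≤ r)
    (hl : ∀ z ∈ coneOver P, 0 ≤ l z) : IsExposed ℝ (r • P) {p ∈ r • P | l (p, r) = 0} := by
  rintro ⟨p₀, hp₀, hlp₀⟩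
  have hle (p q : Fin N → ℝ) : -l (q, 0) ≤ -l (p, 0) ↔ l (p, r) ≤ l (q, r) := by
    have hsub : l (q, r) - l (p, r) = l (q, 0) - l (p, 0) := by
      rw [← map_sub, ← map_sub, Prod.mk_sub_mk, Prod.mk_sub_mk, sub_self, sub_zero]
    constructor <;> intro h <;> linarith
  refine ⟨LinearMap.toContinuousLinearMap (-(l ∘ₗ LinearMap.inl ℝ _ ℝ)), ?_⟩
  ext p
  refine and_congr_right fun hp => ⟨fun h q hq => (hle p q).2 ?_, fun h => ?_⟩
  · exact h ▸ hl _ ((mk_mem_coneOver hP hne hr).2 hq)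
  · exact ((hle p p₀).1 (h p₀ hp₀)).trans_eq hlp₀ |>.antisymm
      (hl _ ((mk_mem_coneOver hP hne hr).2 hp))

lemma IsFacetFunctional.isFacet (hl : IsFacetFunctional (coneOver P) (x, r) l) (hP : Convex ℝ P)
    (hr : 0 < r) (hx : x ∈ r • P) (hdim : 0 < polyDim P) :
    IsFacet (r • P) {p ∈ r • P | l (p, r) = 0} := by
  have hne : P.Nonempty := Set.smul_set_nonempty.1 ⟨x, hx⟩
  have hface : Submodule.span ℝ (coneOver P : Set ((Fin N → ℝ) × ℝ)) ⊓ LinearMap.ker l =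
      Submodule.span ℝ ((fun p => (p, r)) '' {p ∈ r • P | l (p, r) = 0}) := by
    rw [← span_face_eq hP hne hr]
    exact le_antisymm hl.ker_le (le_inf (Submodule.span_mono fun z hz => hz.1)
      (Submodule.span_le.2 fun z hz => hz.2))
  have hfinrank := finrank_span_inf_ker hne ((mk_mem_coneOver hP hne hr.le).2 hx)
    (hl.apply_eq_one ▸ one_ne_zero)
  have hGne : {p ∈ r • P | l (p, r) = 0}.Nonempty := by
    by_contra! hempty
    rw [hface, hempty, Set.image_empty, Submodule.span_empty, finrank_bot] at hfinrank
    omega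
  refine ⟨isExposed_slice hP hne hr.le hl.nonneg, hGne, ?_⟩
  rw [hface, finrank_span_slice hGne hr.ne'] at hfinrank
  rw [polyDim_smul hP hne hr, ← hfinrank, polyDim]

lemma nonneg_of_forall_slice (hr : 0 < r) (hl : ∀ p ∈ r • P, 0 ≤ l (p, r))
    {z : (Fin N → ℝ) × ℝ} (hz : z ∈ coneOver P) : 0 ≤ l z := by
  refine nonneg_of_mem_hull ?_ hz
  rintro _ ⟨p, hp, rfl⟩
  have hscale : (p, (1 : ℝ)) = r⁻¹ • (r • p, r) := by
    ext <;> simp [hr.ne']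
  simp only [hscale, map_smul]
  exact mul_nonneg (inv_nonneg.2 hr.le) (hl _ (Set.smul_mem_smul_set hp))

lemma exists_linearMap_of_isExposed (hG : IsExposed ℝ (r • P) G) (hne : G.Nonempty) (hr : 0 < r) :
    ∃ l : (Fin N → ℝ) × ℝ →ₗ[ℝ] ℝ, (∀ z ∈ coneOver P, 0 ≤ l z) ∧
      G = {p ∈ r • P | l (p, r) = 0} := by
  obtain ⟨φ, rfl⟩ := hG hne
  obtain ⟨p₀, hp₀, hmax⟩ := hne
  set a : (Fin N → ℝ) →ᵃ[ℝ] ℝ := AffineMap.const ℝ _ (φ p₀) - φ.toLinearMap.toAffineMap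
  have happly (p : Fin N → ℝ) : extendFromHeight r a (p, r) = φ p₀ - φ p := by
    rw [extendFromHeight_apply hr.ne']
    rfl
  refine ⟨extendFromHeight r a, fun z hz => nonneg_of_forall_slice hr (fun p hp => ?_) hz, ?_⟩
  · rw [happly]
    exact sub_nonneg.2 (hmax p hp)
  · ext p
    refine and_congr_right fun hp => ?_
    rw [happly, sub_eq_zero]
    exact ⟨fun h => (h p₀ hp₀).antisymm (hmax p hp), fun h q hq => h ▸ hmax q hq⟩

lemma IsFacet.exists_isFacetFunctional (hG : IsFacet (r • P) G) (hP : Convex ℝ P) (hr : 0 < r)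
    (hx : IsConeInterior (coneOver P) (x, r)) :
    ∃ l, IsFacetFunctional (coneOver P) (x, r) l ∧ ∀ p ∈ G, l (p, r) = 0 := by
  obtain ⟨hexp, hGne, hdim⟩ := hG
  obtain ⟨l, hl0, rfl⟩ := exists_linearMap_of_isExposed hexp hGne hr
  have hne : P.Nonempty := Set.smul_set_nonempty.1 (hGne.mono (Set.sep_subset ..))
  have hlx : 0 < l (x, r) := by
    obtain ⟨p, hp, hlp⟩ : ∃ p ∈ r • P, l (p, r) ≠ 0 := by
      by_contra! h
      rw [Set.sep_eq_self_iff_mem_true.2 h] at hdim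
      omega
    exact hx.pos hl0 ((mk_mem_coneOver hP hne hr.le).2 hp) hlp
  refine ⟨(l (x, r))⁻¹ • l, ⟨fun z hz => mul_nonneg (inv_nonneg.2 hlx.le) (hl0 z hz),
    inv_mul_cancel₀ hlx.ne', ?_⟩, fun p hp => by simp [hp.2]⟩
  have hker : Submodule.span ℝ {z ∈ coneOver P | l z = 0} =
      Submodule.span ℝ (coneOver P : Set ((Fin N → ℝ) × ℝ)) ⊓ LinearMap.ker l := by
    refine Submodule.eq_of_le_of_finrank_eq (le_inf (Submodule.span_mono fun z hz => hz.1)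
      (Submodule.span_le.2 fun z hz => hz.2)) ?_
    rw [finrank_span_inf_ker hne hx.mem hlx.ne', span_face_eq hP hne hr,
      finrank_span_slice hGne hr.ne', ← polyDim_smul hP hne hr]
    exact hdim
  have hscale (z : (Fin N → ℝ) × ℝ) : ((l (x, r))⁻¹ • l) z = 0 ↔ l z = 0 := by
    simp [hlx.ne']
  simp only [hscale]
  rw [hker]
  exact le_inf inf_le_left fun z hz => (hscale z).1 hz.2

end Facets

section Gorenstein

variable {N : ℕ} {P : Set (Fin N → ℝ)} {x : Fin N → ℝ}

lemma IsLatticePolytope.convex (hP : IsLatticePolytope P) : Convex ℝ P := by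
  obtain ⟨V, -, -, rfl⟩ := hP
  exact convex_convexHull ℝ _

lemma IsLatticePolytope.nonempty (hP : IsLatticePolytope P) : P.Nonempty := by
  obtain ⟨V, hV, -, rfl⟩ := hP
  exact convexHull_nonempty_iff.2 hV

lemma IsLatticePolytope.exists_isLatticePt (hP : IsLatticePolytope P) :
    ∃ v ∈ P, IsLatticePt v := by
  obtain ⟨V, ⟨v, hv⟩, hVL, rfl⟩ := hP
  exact ⟨v, subset_convexHull ℝ _ hv, hVL v hv⟩

lemma IsLatticePolytope.exists_coneOver_eq_hull (hP : IsLatticePolytope P) :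
    ∃ V : Finset ((Fin N → ℝ) × ℝ), V.Nonempty ∧ (∀ v ∈ V, v ∈ latticeOver P ∧ v.2 = 1) ∧
      coneOver P = PointedCone.hull ℝ (V : Set ((Fin N → ℝ) × ℝ)) := by
  classical
  obtain ⟨V, hV, hVL, rfl⟩ := hP
  refine ⟨V.image fun v => (v, 1), hV.image _, ?_, ?_⟩
  · simp only [Finset.forall_mem_image]
    refine fun v hv => ⟨mk_one_mem_latticeOver (subset_affineSpan ℝ _ ?_) (hVL v hv), by simp⟩
    exact subset_convexHull ℝ _ hv
  · rw [coneOver_convexHull, coneOver, Finset.coe_image]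

lemma IsLatticePolytope.exists_mem_apply_eq_zero (hP : IsLatticePolytope P)
    {l : (Fin N → ℝ) × ℝ →ₗ[ℝ] ℝ} (hl : ∀ z ∈ coneOver P, 0 ≤ l z) {z : (Fin N → ℝ) × ℝ}
    (hz : z ∈ coneOver P) (hz0 : z ≠ 0) (hlz : l z = 0) :
    ∃ v ∈ latticeOver P, v.2 = 1 ∧ l v = 0 := by
  have hz2 : 0 < z.2 := snd_pos_of_mem_coneOver hP.convex hP.nonempty hz hz0
  obtain ⟨V, hV, hVΛ, hC⟩ := hP.exists_coneOver_eq_hull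
  obtain ⟨v, hv, hmin⟩ := V.exists_min_image l hV
  refine ⟨v, (hVΛ v hv).1, (hVΛ v hv).2, le_antisymm ?_ (hl v (hC ▸ PointedCone.subset_hull hv))⟩
  have hle : 0 ≤ (l - l v • LinearMap.snd ℝ (Fin N → ℝ) ℝ) z := by
    refine nonneg_of_mem_hull (fun w hw => ?_) (hC ▸ hz)
    simpa [(hVΛ w hw).2] using hmin w hw
  have : l v * z.2 ≤ 0 := by simpa [hlz] using hle
  exact nonpos_of_mul_nonpos_left this hz2

lemma IsFacetFunctional.apply_eq_of_const_on_facet {r : ℝ} {l : (Fin N → ℝ) × ℝ →ₗ[ℝ] ℝ}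
    (hl : IsFacetFunctional (coneOver P) (x, r) l) (hP : Convex ℝ P) (hr : 0 < r)
    (hx : x ∈ r • P) {u : (Fin N → ℝ) →ᵃ[ℝ] ℝ}
    (hu : ∀ q ∈ {q ∈ r • P | l (q, r) = 0}, u q = u x + 1) {y : Fin N → ℝ}
    (hy : (y, r) ∈ Submodule.span ℝ (coneOver P : Set ((Fin N → ℝ) × ℝ))) :
    l (y, r) = u x + 1 - u y := by
  have hne : P.Nonempty := Set.smul_set_nonempty.1 ⟨x, hx⟩
  set L := extendFromHeight r (AffineMap.const ℝ (Fin N → ℝ) (u x + 1) - u)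
  have hL (q : Fin N → ℝ) : L (q, r) = u x + 1 - u q := extendFromHeight_apply hr.ne' _ q
  have hker : Submodule.span ℝ {z ∈ coneOver P | l z = 0} ≤ LinearMap.ker L := by
    rw [span_face_eq hP hne hr, Submodule.span_le]
    rintro _ ⟨q, hq, rfl⟩
    exact (hL q).trans (sub_eq_zero.2 (hu q hq).symm)
  rw [← hL, hl.eqOn_span ((mk_mem_coneOver hP hne hr.le).2 hx)
    (fun z hz hlz => hker (Submodule.subset_span ⟨hz, hlz⟩)) (by rw [hL]; ring) hy]

/-- The lattice distance function of a facet of `r • P` is integral on the lattice points of height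
`r`; a lattice point `v` of `P` on that facet transfers this to height `1` along
`(y, 1) ↦ (y, 1) + (r - 1) (v, 1)`. -/
lemma IsLatticePolytope.isGorensteinPoint (hP : IsLatticePolytope P) (hdim : 0 < polyDim P)
    {r : ℕ} (hr : 0 < r) (hx : x ∈ intrinsicInterior ℝ ((r : ℝ) • P)) (hxL : IsLatticePt x)
    (hfacet : ∀ F, IsFacet ((r : ℝ) • P) F → ∃ u : (Fin N → ℝ) →ᵃ[ℝ] ℝ,
      IsIntegralOn ((r : ℝ) • P) u ∧ ∀ f ∈ F, u f = u x + 1) :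
    IsGorensteinPoint (coneOver P) (latticeOver P) (x, (r : ℝ)) := by
  have hr' : (0 : ℝ) < r := Nat.cast_pos.2 hr
  have hxC : IsConeInterior (coneOver P) (x, (r : ℝ)) :=
    (isConeInterior_coneOver_iff hP.convex hP.nonempty hr').2 hx
  have hxS : x ∈ affineSpan ℝ ((r : ℝ) • P) :=
    subset_affineSpan ℝ _ (intrinsicInterior_subset hx)
  refine ⟨hxC, (mk_mem_latticeOver hP.convex hP.nonempty hr).2 ⟨hxS, hxL⟩, fun l hl => ?_⟩
  have hG := hl.isFacet hP.convex hr' (intrinsicInterior_subset hx) hdim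
  obtain ⟨u, hu, huG⟩ := hfacet _ hG
  obtain ⟨p, hp, hlp⟩ := hG.2.1
  obtain ⟨v, hvΛ, hv2, hlv⟩ := hP.exists_mem_apply_eq_zero hl.nonneg
    ((mk_mem_coneOver hP.convex hP.nonempty hr'.le).2 hp) (fun h => hr'.ne' (congrArg Prod.snd h))
    hlp
  obtain ⟨p₀, hp₀, hp₀L⟩ := hP.exists_isLatticePt
  refine fun y hy => exists_int_of_mem_latticeOver hp₀ hp₀L (fun y hy hyL => ?_) hy
  obtain ⟨w, hw⟩ : ∃ w, (y, (1 : ℝ)) + (r - 1 : ℤ) • v = (w, (r : ℝ)) :=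
    ⟨_, Prod.ext rfl (by simp [hv2])⟩
  have hwΛ : (w, (r : ℝ)) ∈ latticeOver P :=
    hw ▸ add_mem (mk_one_mem_latticeOver hy hyL) (zsmul_mem hvΛ _)
  obtain ⟨hwS, hwL⟩ := (mk_mem_latticeOver hP.convex hP.nonempty hr).1 hwΛ
  have hlw := hl.apply_eq_of_const_on_facet hP.convex hr' (intrinsicInterior_subset hx) huG
    (mem_latticeOver.1 hwΛ).1
  obtain ⟨j, hj⟩ := hu x hxS hxL
  obtain ⟨k, hk⟩ := hu w hwS hwL
  have hl_eq : l (y, 1) = l (w, r) := by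
    rw [← hw, map_add, map_zsmul, hlv, smul_zero, add_zero]
  exact ⟨j + 1 - k, by rw [hl_eq, hlw, hj, hk]; push_cast; ring⟩

lemma IsGorensteinPoint.isReflexivePolytope (hP : IsLatticePolytope P) {r : ℕ} (hr : 0 < r)
    (hx : IsGorensteinPoint (coneOver P) (latticeOver P) (x, (r : ℝ))) :
    IsReflexivePolytope ((r : ℝ) • P) := by
  have hr' : (0 : ℝ) < r := Nat.cast_pos.2 hr
  refine ⟨x, (isConeInterior_coneOver_iff hP.convex hP.nonempty hr').1 hx.isConeInterior,
    (mem_latticeOver.1 hx.mem).2.1, fun F hF => ?_⟩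
  obtain ⟨l, hl, hlF⟩ := hF.exists_isFacetFunctional hP.convex hr' hx.isConeInterior
  refine ⟨(-l).toAffineMap.comp ((AffineMap.id ℝ _).prod (AffineMap.const ℝ _ (r : ℝ))), ?_, ?_⟩
  · intro y hy hyL
    obtain ⟨k, hk⟩ := hx.integral l hl (y, r)
      ((mk_mem_latticeOver hP.convex hP.nonempty hr).2 ⟨hy, hyL⟩)
    exact ⟨-k, by simp [hk]⟩
  · intro f hf
    simp [hlF f hf, hl.apply_eq_one]

lemma not_isHollow_smul_iff (hP : IsLatticePolytope P) {r : ℕ} (hr : 0 < r) :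
    ¬ IsHollow ((r : ℝ) • P) ↔
      ∃ y, IsConeInterior (coneOver P) (y, (r : ℝ)) ∧ (y, (r : ℝ)) ∈ latticeOver P := by
  simp only [IsHollow, not_forall, not_not, exists_prop,
    isConeInterior_coneOver_iff hP.convex hP.nonempty (Nat.cast_pos.2 hr),
    mk_mem_latticeOver hP.convex hP.nonempty hr]
  exact exists_congr fun y => and_congr_right fun hy =>
    (and_iff_right (subset_affineSpan ℝ _ (intrinsicInterior_subset hy))).symm

lemma IsLatticePolytope.polyCodeg_spec (hP : IsLatticePolytope P) :
    0 < polyCodeg P ∧ ∃ y, IsConeInterior (coneOver P) (y, (polyCodeg P : ℝ)) ∧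
      (y, (polyCodeg P : ℝ)) ∈ latticeOver P := by
  obtain ⟨V, hV, hVΛ, hC⟩ := hP.exists_coneOver_eq_hull
  have hsum : ∑ v ∈ V, v = (∑ v ∈ V, v.1, (V.card : ℝ)) := by
    refine Prod.ext Prod.fst_sum ?_
    rw [Prod.snd_sum, Finset.sum_congr rfl fun v hv => (hVΛ v hv).2]
    simp
  have hne : {r : ℕ | 0 < r ∧ ¬ IsHollow ((r : ℝ) • P)}.Nonempty := by
    refine ⟨V.card, hV.card_pos, (not_isHollow_smul_iff hP hV.card_pos).2 ⟨∑ v ∈ V, v.1, ?_⟩⟩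
    rw [← hsum, hC]
    exact ⟨isConeInterior_sum V, sum_mem fun v hv => (hVΛ v hv).1⟩
  obtain ⟨hpos, hhollow⟩ := Nat.sInf_mem hne
  exact ⟨hpos, (not_isHollow_smul_iff hP hpos).1 hhollow⟩

lemma IsGorensteinPoint.polyCodeg_eq (hP : IsLatticePolytope P) {r : ℕ} (hr : 0 < r)
    (hx : IsGorensteinPoint (coneOver P) (latticeOver P) (x, (r : ℝ))) : polyCodeg P = r := by
  obtain ⟨-, y, hy, hyΛ⟩ := hP.polyCodeg_spec
  obtain ⟨V, -, hV, hC⟩ := hP.exists_coneOver_eq_hull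
  have hle : (r : ℝ) ≤ polyCodeg P := by
    rw [hC] at hx hy
    exact hx.apply_le hy hyΛ (l := LinearMap.snd ℝ _ ℝ)
      fun v hv => zero_le_one.trans_eq (hV v hv).2.symm
  refine le_antisymm (Nat.sInf_le ⟨hr, ?_⟩) (Nat.cast_le.1 hle)
  exact (not_isHollow_smul_iff hP hr).2 ⟨x, hx.isConeInterior, hx.mem⟩

lemma IsLatticePolytope.exists_isGorensteinPoint (hP : IsLatticePolytope P)
    (hdim : 0 < polyDim P) (hG : IsGorenstein P) :
    ∃ x, IsGorensteinPoint (coneOver P) (latticeOver P) (x, (polyCodeg P : ℝ)) := by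
  obtain ⟨r, hr, x, hx, hxL, hfacet⟩ := hG
  have hm := hP.isGorensteinPoint hdim hr hx hxL hfacet
  exact ⟨x, hm.polyCodeg_eq hP hr ▸ hm⟩

lemma IsLatticePolytope.eq_singleton_of_polyDim_eq_zero (hP : IsLatticePolytope P)
    (hdim : polyDim P = 0) : ∃ x, IsLatticePt x ∧ P = {x} := by
  obtain ⟨x, hx, hxL⟩ := hP.exists_isLatticePt
  rw [polyDim, direction_affineSpan, Submodule.finrank_eq_zero,
    vectorSpan_eq_bot_iff_subsingleton] at hdim
  exact ⟨x, hxL, hdim.eq_singleton_of_mem hx⟩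

end Gorenstein

section Pyramids

variable {N m : ℕ} {P : Set (Fin N → ℝ)}

/-- The linear map appending a last coordinate. -/
def snocLinearMap (m : ℕ) : (Fin m → ℝ) × ℝ →ₗ[ℝ] (Fin (m + 1) → ℝ) where
  toFun z := Fin.snoc z.1 z.2
  map_add' y z := by
    ext i
    refine Fin.lastCases ?_ (fun i => ?_) i <;> simp
  map_smul' c z := by
    ext i
    refine Fin.lastCases ?_ (fun i => ?_) i <;> simp

@[simp]
lemma snocLinearMap_castSucc (z : (Fin m → ℝ) × ℝ) (i : Fin m) :
    snocLinearMap m z i.castSucc = z.1 i :=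
  Fin.snoc_castSucc (α := fun _ => ℝ) ..

@[simp]
lemma snocLinearMap_last (z : (Fin m → ℝ) × ℝ) : snocLinearMap m z (Fin.last m) = z.2 :=
  Fin.snoc_last (α := fun _ => ℝ) ..

lemma isLatticePt_snocLinearMap {z : (Fin m → ℝ) × ℝ} (hz : IsLatticePt z.1)
    (hz' : ∃ k : ℤ, z.2 = k) : IsLatticePt (snocLinearMap m z) :=
  Fin.lastCases (by simpa using hz') fun i => by simpa using hz i

lemma IsLatticePt.add_intCast_smul {x y : Fin m → ℝ} (hx : IsLatticePt x) (hy : IsLatticePt y)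
    (k : ℤ) : IsLatticePt (x + (k : ℝ) • y) := by
  intro i
  obtain ⟨a, ha⟩ := hx i
  obtain ⟨b, hb⟩ := hy i
  exact ⟨a + k * b, by simp [ha, hb]⟩

lemma pyramidOver_convexHull (V : Set (Fin m → ℝ)) :
    pyramidOver (convexHull ℝ V) = convexHull ℝ
      (insert (snocLinearMap m (0, 1)) ((fun x => snocLinearMap m (x, 0)) '' V)) := by
  have himage : (fun x => Fin.snoc x (0 : ℝ)) '' convexHull ℝ V =
      convexHull ℝ ((fun x => snocLinearMap m (x, 0)) '' V) :=
    (snocLinearMap m ∘ₗ LinearMap.inl ℝ _ ℝ).image_convexHull V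
  rw [pyramidOver, himage, convexHull_convexHull_union_left, Set.union_singleton]
  rfl

/-- `P` is the pyramid with apex `v₀` over the convex hull of the lattice points `V`: the functional
`π`, integral on `P`, places the base at height `0` and the apex at height `1`. For `V = ∅` this is
the single point `v₀`. -/
structure IsPyramidWith (P : Set (Fin N → ℝ)) (v₀ : Fin N → ℝ) (V : Finset (Fin N → ℝ))
    (π : (Fin N → ℝ) →ᵃ[ℝ] ℝ) : Prop where
  eq_convexHull : P = convexHull ℝ (insert v₀ (V : Set (Fin N → ℝ)))
  isLatticePt_apex : IsLatticePt v₀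
  isLatticePt_base : ∀ v ∈ V, IsLatticePt v
  isIntegralOn : IsIntegralOn P π
  apply_apex : π v₀ = 1
  apply_base : ∀ v ∈ V, π v = 0

lemma IsLatticePyramid.exists_isPyramidWith (hP : IsLatticePyramid P) :
    ∃ v₀ V π, IsPyramidWith P v₀ V π := by
  classical
  rcases hP with ⟨x, hx, rfl⟩ | ⟨m, _, ⟨V, -, hV, rfl⟩, f, g, -, hg, -, hfg, hfL, hgL⟩
  · exact ⟨x, ∅, AffineMap.const ℝ _ 1, by simp, hx, by simp, fun _ _ _ => ⟨1, by simp⟩, by simp,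
      by simp⟩
  have hQ := pyramidOver_convexHull (V : Set (Fin m → ℝ))
  have hgen : insert (snocLinearMap m (0, 1)) ((fun x => snocLinearMap m (x, 0)) '' V) ⊆
      (affineSpan ℝ (pyramidOver (convexHull ℝ (V : Set (Fin m → ℝ)))) : Set _) := by
    rw [hQ]
    exact (subset_convexHull ℝ _).trans (subset_affineSpan ℝ _)
  obtain ⟨hapex, hbase⟩ := Set.insert_subset_iff.1 hgen
  have hbase {v : Fin m → ℝ} (hv : v ∈ V) := hbase (Set.mem_image_of_mem _ hv)
  refine ⟨g (snocLinearMap m (0, 1)), V.image fun x => g (snocLinearMap m (x, 0)),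
    (LinearMap.proj (Fin.last m)).toAffineMap.comp f, ?_, ?_, ?_, ?_, ?_, ?_⟩
  · rw [← hg, hQ, AffineMap.image_convexHull, Set.image_insert_eq, Set.image_image,
      Finset.coe_image]
  · exact hgL _ hapex (isLatticePt_snocLinearMap (fun _ => ⟨0, by simp⟩) ⟨1, by simp⟩)
  · simp only [Finset.forall_mem_image]
    exact fun v hv => hgL _ (hbase hv) (isLatticePt_snocLinearMap (hV v hv) ⟨0, by simp⟩)
  · exact fun y hy hyL => hfL y hy hyL (Fin.last m)
  · exact (congrFun (hfg _ hapex) _).trans (snocLinearMap_last _)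
  · simp only [Finset.forall_mem_image]
    exact fun v hv => (congrFun (hfg _ (hbase hv)) _).trans (snocLinearMap_last _)

lemma IsPyramidWith.isFacetFunctional {v₀ : Fin N → ℝ} {V : Finset (Fin N → ℝ)}
    {π : (Fin N → ℝ) →ᵃ[ℝ] ℝ} (h : IsPyramidWith P v₀ V π) {m : (Fin N → ℝ) × ℝ}
    (hm : IsGorensteinPoint (coneOver P) (latticeOver P) m) :
    IsFacetFunctional (coneOver P) m (extendFromHeight 1 π) := by
  have hv₀ : v₀ ∈ P := h.eq_convexHull ▸ subset_convexHull ℝ _ (Set.mem_insert _ _)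
  have happly (p : Fin N → ℝ) : extendFromHeight 1 π (p, 1) = π p :=
    extendFromHeight_apply one_ne_zero π p
  have hC : coneOver P =
      PointedCone.hull ℝ (insert (v₀, 1) ((fun p => (p, (1 : ℝ))) '' (V : Set (Fin N → ℝ)))) := by
    rw [h.eq_convexHull, coneOver_convexHull, coneOver, Set.image_insert_eq]
  rw [hC] at hm ⊢
  refine hm.isFacetFunctional_of_apex
    (mk_one_mem_latticeOver (subset_affineSpan ℝ _ hv₀) h.isLatticePt_apex) ?_ ?_ fun z hz => ?_
  · rw [happly, h.apply_apex]
  · rintro _ ⟨v, hv, rfl⟩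
    rw [happly, h.apply_base v hv]
  · refine exists_int_of_mem_latticeOver hv₀ h.isLatticePt_apex (fun y hy hyL => ?_) hz
    rw [happly]
    exact h.isIntegralOn y hy hyL

/-- The isomorphism onto the standard pyramid sends `x` to `(x - π x • v₀, π x)`. -/
lemma IsPyramidWith.isLatticePyramid {v₀ : Fin N → ℝ} {V : Finset (Fin N → ℝ)}
    {π : (Fin N → ℝ) →ᵃ[ℝ] ℝ} (h : IsPyramidWith P v₀ V π) : IsLatticePyramid P := by
  obtain ⟨rfl, hv₀, hV, hπ, hπv₀, hπV⟩ := h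
  rcases V.eq_empty_or_nonempty with rfl | hne
  · exact .inl ⟨v₀, hv₀, by simp⟩
  set f : (Fin N → ℝ) →ᵃ[ℝ] (Fin (N + 1) → ℝ) := (snocLinearMap N).toAffineMap.comp
    ((AffineMap.id ℝ _ - (LinearMap.toSpanSingleton ℝ _ v₀).toAffineMap.comp π).prod π)
  set g : (Fin (N + 1) → ℝ) →ᵃ[ℝ] (Fin N → ℝ) := (LinearMap.funLeft ℝ ℝ Fin.castSucc +
    (LinearMap.proj (Fin.last N)).smulRight v₀).toAffineMap
  have hf (x : Fin N → ℝ) : f x = snocLinearMap N (x - π x • v₀, π x) := rfl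
  have hg (y : Fin (N + 1) → ℝ) : g y = y ∘ Fin.castSucc + y (Fin.last N) • v₀ := rfl
  have hgf (x : Fin N → ℝ) : g (f x) = x := by
    ext i
    simp [hg, hf]
  have hfP : f '' convexHull ℝ (insert v₀ (V : Set (Fin N → ℝ))) =
      pyramidOver (convexHull ℝ (V : Set (Fin N → ℝ))) := by
    rw [pyramidOver_convexHull, AffineMap.image_convexHull, Set.image_insert_eq]
    have hfV : f '' V = (fun x => snocLinearMap N (x, 0)) '' V :=
      Set.image_congr fun v hv => by rw [hf, hπV v hv, zero_smul, sub_zero]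
    rw [hfV, hf, hπv₀, one_smul, sub_self]
  refine .inr ⟨N, _, ⟨V, hne, hV, rfl⟩, f, g, hfP, ?_, fun x _ => hgf x, ?_, ?_, ?_⟩
  · rw [← hfP, Set.image_image]
    simp only [hgf, Set.image_id']
  · rw [← hfP, ← AffineSubspace.map_span]
    rintro _ ⟨x, -, rfl⟩
    exact congrArg f (hgf x)
  · intro x hx hxL
    obtain ⟨k, hk⟩ := hπ x hx hxL
    rw [hf]
    refine isLatticePt_snocLinearMap ?_ ⟨k, hk⟩
    simpa [hk, sub_eq_add_neg] using hxL.add_intCast_smul hv₀ (-k)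
  · intro y _ hyL
    obtain ⟨k, hk⟩ := hyL (Fin.last N)
    rw [hg, hk]
    exact IsLatticePt.add_intCast_smul (fun i => hyL i.castSucc) hv₀ k

end Pyramids

section Factorizations

variable {N n n₁ n₂ k : ℕ} {P : Set (Fin N → ℝ)} {F : Set (Fin n₁ → ℝ)} {G : Set (Fin n₂ → ℝ)}
  {α : (Fin n₁ → ℝ) →ᵃ[ℝ] (Fin N → ℝ)} {β : (Fin n₂ → ℝ) →ᵃ[ℝ] (Fin N → ℝ)} {x : Fin N → ℝ}

/-- `P` is the convex hull of copies `α '' F` and `β '' G` of two lattice polytopes in complementary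
affine subspaces, with `codeg F + codeg G = codeg P`. Unlike in `IsReducibleWith`, the ambient
Cayley polytope does not appear and `F` and `G` may live in different spaces. -/
structure IsFactorization (P : Set (Fin N → ℝ)) (F : Set (Fin n₁ → ℝ)) (G : Set (Fin n₂ → ℝ))
    (α : (Fin n₁ → ℝ) →ᵃ[ℝ] (Fin N → ℝ)) (β : (Fin n₂ → ℝ) →ᵃ[ℝ] (Fin N → ℝ)) : Prop where
  left : IsLatticePolytope F
  right : IsLatticePolytope G
  preservesLattice_left : PreservesLattice α F
  preservesLattice_right : PreservesLattice β G
  eq_convexHull : P = convexHull ℝ (α '' F ∪ β '' G)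
  polyDim_add : polyDim F + polyDim G + 1 = polyDim P
  polyCodeg_add : polyCodeg F + polyCodeg G = polyCodeg P

lemma IsFactorization.symm (h : IsFactorization P F G α β) : IsFactorization P G F β α where
  left := h.right
  right := h.left
  preservesLattice_left := h.preservesLattice_right
  preservesLattice_right := h.preservesLattice_left
  eq_convexHull := by rw [Set.union_comm, h.eq_convexHull]
  polyDim_add := by rw [add_comm (polyDim G), h.polyDim_add]
  polyCodeg_add := by rw [add_comm, h.polyCodeg_add]

/-- The affine map appending the constant coordinates `c`. -/
def appendAffineMap (n : ℕ) (c : Fin k → ℝ) : (Fin n → ℝ) →ᵃ[ℝ] (Fin (n + k) → ℝ) where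
  toFun x := Fin.append x c
  linear := LinearMap.pi (Fin.addCases LinearMap.proj fun _ => 0)
  map_vadd' x v := by
    ext i
    refine Fin.addCases (fun i => ?_) (fun i => ?_) i <;> simp

lemma isLatticePt_append {x : Fin n → ℝ} {c : Fin k → ℝ} (hx : IsLatticePt x)
    (hc : IsLatticePt c) : IsLatticePt (Fin.append x c) :=
  Fin.addCases (fun i => by simpa using hx i) fun i => by simpa using hc i

lemma preservesLattice_comp_append {F : Set (Fin n → ℝ)} {c : Fin k → ℝ} {Q : Set (Fin (n + k) → ℝ)}
    {g : (Fin (n + k) → ℝ) →ᵃ[ℝ] (Fin N → ℝ)} (hg : PreservesLattice g Q) (hc : IsLatticePt c)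
    (hFQ : appendAffineMap n c '' F ⊆ Q) : PreservesLattice (g.comp (appendAffineMap n c)) F := by
  intro y hy hyL
  refine hg _ (affineSpan_mono ℝ hFQ ?_) (isLatticePt_append hyL hc)
  rw [← AffineSubspace.map_span]
  exact AffineSubspace.mem_map_of_mem _ hy

lemma IsReducibleWith.isFactorization {F G : Set (Fin n → ℝ)} (hF : IsLatticePolytope F)
    (hG : IsLatticePolytope G) (h : IsReducibleWith P F G) :
    ∃ α β, IsFactorization P F G α β := by
  obtain ⟨⟨⟨f, g, -, hg, -, -, -, hgL⟩, hdim⟩, hcodeg⟩ := h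
  refine ⟨g.comp (appendAffineMap n ![1, 0]), g.comp (appendAffineMap n ![0, 1]), hF, hG,
    preservesLattice_comp_append hgL ?_ ?_, preservesLattice_comp_append hgL ?_ ?_, ?_, hdim,
    hcodeg⟩
  · exact Fin.forall_fin_two.2 ⟨⟨1, by simp⟩, ⟨0, by simp⟩⟩
  · exact Set.subset_union_left.trans (subset_convexHull ℝ _)
  · exact Fin.forall_fin_two.2 ⟨⟨0, by simp⟩, ⟨1, by simp⟩⟩
  · exact Set.subset_union_right.trans (subset_convexHull ℝ _)
  · rw [← hg, cayleyTwo, AffineMap.image_convexHull, Set.image_union, Set.image_image,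
      Set.image_image]
    rfl

lemma IsFactorization.coneOver_eq (h : IsFactorization P F G α β) :
    coneOver P = (coneOver F).map (homogenize α) ⊔ (coneOver G).map (homogenize β) := by
  rw [h.eq_convexHull, coneOver_convexHull, coneOver_union, map_homogenize_coneOver,
    map_homogenize_coneOver]

lemma IsFactorization.homogenize_mem_left (h : IsFactorization P F G α β)
    {z : (Fin n₁ → ℝ) × ℝ} (hz : z ∈ latticeOver F) : homogenize α z ∈ latticeOver P := by
  obtain ⟨p₀, hp₀, hp₀L⟩ := h.left.exists_isLatticePt
  refine h.preservesLattice_left.homogenize_mem ?_ hp₀ hp₀L hz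
  rw [h.eq_convexHull]
  exact Set.subset_union_left.trans (subset_convexHull ℝ _)

lemma IsFactorization.exists_retraction (h : IsFactorization P F G α β) (hP : P.Nonempty) :
    ∃ ρ : (Fin N → ℝ) × ℝ →ₗ[ℝ] (Fin n₁ → ℝ) × ℝ,
      (∀ z ∈ Submodule.span ℝ (coneOver F : Set ((Fin n₁ → ℝ) × ℝ)), ρ (homogenize α z) = z) ∧
      ∀ z ∈ Submodule.span ℝ (coneOver G : Set ((Fin n₂ → ℝ) × ℝ)), ρ (homogenize β z) = 0 := by
  refine _root_.exists_retraction _ _ _ _ ?_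
  rw [← span_map_sup_map, ← h.coneOver_eq, finrank_span_coneOver hP,
    finrank_span_coneOver h.left.nonempty, finrank_span_coneOver h.right.nonempty, ← h.polyDim_add]
  ring

/-- Codegrees add up, so the sum of two interior lattice points realising the codegrees of the
factors has the height of the Gorenstein point of `P`, which is unique at that height. -/
lemma IsFactorization.exists_add_eq (h : IsFactorization P F G α β) (hP : IsLatticePolytope P)
    (hx : IsGorensteinPoint (coneOver P) (latticeOver P) (x, (polyCodeg P : ℝ))) :
    ∃ y z, (IsConeInterior (coneOver F) (y, (polyCodeg F : ℝ)) ∧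
        (y, (polyCodeg F : ℝ)) ∈ latticeOver F) ∧
      IsConeInterior (coneOver G) (z, (polyCodeg G : ℝ)) ∧
      homogenize α (y, (polyCodeg F : ℝ)) + homogenize β (z, (polyCodeg G : ℝ)) =
        (x, (polyCodeg P : ℝ)) := by
  obtain ⟨-, y, hy, hyΛ⟩ := h.left.polyCodeg_spec
  obtain ⟨-, z, hz, hzΛ⟩ := h.right.polyCodeg_spec
  refine ⟨y, z, ⟨hy, hyΛ⟩, hz, ?_⟩
  have hyz := hy.sup_map hz (homogenize α) (homogenize β)
  rw [← h.coneOver_eq] at hyz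
  obtain ⟨V, -, hV, hC⟩ := hP.exists_coneOver_eq_hull
  rw [hC] at hx hyz
  refine hx.eq_of_apply_eq hyz (add_mem (h.homogenize_mem_left hyΛ)
    (h.symm.homogenize_mem_left hzΛ)) (h := LinearMap.snd ℝ _ ℝ)
    (fun v hv => zero_lt_one.trans_eq (hV v hv).2.symm) ?_
  simp [snd_homogenize, ← h.polyCodeg_add]

lemma IsFactorization.exists_isGorensteinPoint (h : IsFactorization P F G α β)
    (hP : IsLatticePolytope P)
    (hx : IsGorensteinPoint (coneOver P) (latticeOver P) (x, (polyCodeg P : ℝ))) :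
    ∃ y, IsGorensteinPoint (coneOver F) (latticeOver F) (y, (polyCodeg F : ℝ)) ∧
      ∀ l, IsFacetFunctional (coneOver F) (y, (polyCodeg F : ℝ)) l →
        ∃ l', IsFacetFunctional (coneOver P) (x, (polyCodeg P : ℝ)) l' ∧
          (∀ v ∈ F, l' (α v, 1) = l (v, 1)) ∧ ∀ w ∈ G, l' (β w, 1) = 0 := by
  obtain ⟨y, z, ⟨hy, hyΛ⟩, hz, hyz⟩ := h.exists_add_eq hP hx
  obtain ⟨ρ, hρα, hρβ⟩ := h.exists_retraction hP.nonempty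
  rw [← hyz, h.coneOver_eq] at hx ⊢
  refine ⟨y, hx.of_join hy hyΛ hz.mem (fun w hw => (mem_latticeOver.1 hw).1)
    (fun w => h.homogenize_mem_left) hρα hρβ, fun l hl => ?_⟩
  refine ⟨_, hl.comp_retraction hy.mem hz.mem hρα hρβ, fun v hv => ?_, fun w hw => ?_⟩
  · rw [LinearMap.comp_apply, ← homogenize_apply_one, hρα]
    exact Submodule.subset_span (PointedCone.subset_hull ⟨v, hv, rfl⟩)
  · rw [LinearMap.comp_apply, ← homogenize_apply_one, hρβ, map_zero]
    exact Submodule.subset_span (PointedCone.subset_hull ⟨w, hw, rfl⟩)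

lemma IsFactorization.isGorenstein_left (h : IsFactorization P F G α β)
    (hP : IsLatticePolytope P) (hdim : 0 < polyDim P) (hG : IsGorenstein P) : IsGorenstein F := by
  obtain ⟨x, hx⟩ := hP.exists_isGorensteinPoint hdim hG
  obtain ⟨y, hy, -⟩ := h.exists_isGorensteinPoint hP hx
  have hpos : 0 < polyCodeg F := h.left.polyCodeg_spec.1
  exact ⟨polyCodeg F, hpos, hy.isReflexivePolytope h.left hpos⟩

lemma IsFactorization.isPyramidWith (h : IsFactorization P F G α β) (hP : IsLatticePolytope P)
    (hx : IsGorensteinPoint (coneOver P) (latticeOver P) (x, (polyCodeg P : ℝ)))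
    {v₀ : Fin n₁ → ℝ} {V : Finset (Fin n₁ → ℝ)} {π : (Fin n₁ → ℝ) →ᵃ[ℝ] ℝ}
    (hF : IsPyramidWith F v₀ V π) : ∃ V' π', IsPyramidWith P (α v₀) V' π' := by
  classical
  obtain ⟨y, hy, hlift⟩ := h.exists_isGorensteinPoint hP hx
  obtain ⟨l, hl, hlα, hlβ⟩ := hlift _ (hF.isFacetFunctional hy)
  have hlα {v : Fin n₁ → ℝ} (hv : v ∈ F) : l (α v, 1) = π v :=
    (hlα v hv).trans (extendFromHeight_apply one_ne_zero π v)
  obtain ⟨W, -, hW, hGW⟩ := h.right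
  have hv₀ : v₀ ∈ F := hF.eq_convexHull ▸ subset_convexHull ℝ _ (Set.mem_insert _ _)
  have hV {v : Fin n₁ → ℝ} (hv : v ∈ V) : v ∈ F :=
    hF.eq_convexHull ▸ subset_convexHull ℝ _ (Set.mem_insert_of_mem _ hv)
  have hWG {w : Fin n₂ → ℝ} (hw : w ∈ W) : w ∈ G := hGW ▸ subset_convexHull ℝ _ hw
  have hα {v : Fin n₁ → ℝ} (hv : v ∈ F) := h.preservesLattice_left v (subset_affineSpan ℝ _ hv)
  have hβ {w : Fin n₂ → ℝ} (hw : w ∈ G) := h.preservesLattice_right w (subset_affineSpan ℝ _ hw)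
  refine ⟨V.image α ∪ W.image β,
    l.toAffineMap.comp ((AffineMap.id ℝ _).prod (AffineMap.const ℝ _ 1)), ?_, ?_, ?_, ?_, ?_, ?_⟩
  · rw [h.eq_convexHull, hF.eq_convexHull, hGW, AffineMap.image_convexHull,
      AffineMap.image_convexHull, convexHull_convexHull_union_left,
      convexHull_convexHull_union_right, Set.image_insert_eq, Set.insert_union, Finset.coe_union,
      Finset.coe_image, Finset.coe_image]
  · exact hα hv₀ hF.isLatticePt_apex
  · simp only [Finset.forall_mem_union, Finset.forall_mem_image]
    exact ⟨fun v hv => hα (hV hv) (hF.isLatticePt_base v hv), fun w hw => hβ (hWG hw) (hW w hw)⟩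
  · exact fun y hy hyL => hx.integral l hl _ (mk_one_mem_latticeOver hy hyL)
  · exact (hlα hv₀).trans hF.apply_apex
  · simp only [Finset.forall_mem_union, Finset.forall_mem_image]
    exact ⟨fun v hv => (hlα (hV hv)).trans (hF.apply_base v hv), fun w hw => hlβ w (hWG hw)⟩

lemma IsFactorization.isLatticePyramid_of_left (h : IsFactorization P F G α β)
    (hP : IsLatticePolytope P) (hdim : 0 < polyDim P) (hG : IsGorenstein P)
    (hF : IsLatticePyramid F) : IsLatticePyramid P := by
  obtain ⟨x, hx⟩ := hP.exists_isGorensteinPoint hdim hG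
  obtain ⟨v₀, V, π, hF⟩ := hF.exists_isPyramidWith
  obtain ⟨V', π', hP'⟩ := h.isPyramidWith hP hx hF
  exact hP'.isLatticePyramid

lemma IsFactorization.mul_polyDeg_le_or (h : IsFactorization P F G α β) {c : ℕ}
    (hc : c * polyDeg P ≤ polyDim P) :
    c * polyDeg F ≤ polyDim F ∨ c * polyDeg G ≤ polyDim G := by
  by_contra! hlt
  have hdim := h.polyDim_add
  have hF : polyDeg F ≠ 0 := fun h0 => by simp [h0] at hlt
  have hG : polyDeg G ≠ 0 := fun h0 => by simp [h0] at hlt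
  have hdeg : polyDeg F + polyDeg G = polyDeg P := by
    have hcodeg := h.polyCodeg_add
    unfold polyDeg at hF hG ⊢
    omega
  rw [← hdeg, mul_add] at hc
  omega

end Factorizations

theorem stmt5_general (c : ℕ)
    (H : ∀ (N : ℕ) (P : Set (Fin N → ℝ)), IsLatticePolytope P → IsGorenstein P →
      0 < polyDim P → c * polyDeg P ≤ polyDim P → IsReducible P) :
    ∀ (N : ℕ) (P : Set (Fin N → ℝ)), IsLatticePolytope P → IsGorenstein P →
      c * polyDeg P ≤ polyDim P → IsLatticePyramid P := by
  intro N P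
  induction hd : polyDim P using Nat.strong_induction_on generalizing N P with
  | _ d ih =>
  subst hd
  intro hP hPG hdeg
  rcases (polyDim P).eq_zero_or_pos with hdim | hdim
  · exact .inl (hP.eq_singleton_of_polyDim_eq_zero hdim)
  rcases H N P hP hPG hdim hdeg with hpoint | ⟨n, F, G, hF, hG, hFG⟩
  · exact .inl hpoint
  obtain ⟨α, β, hαβ⟩ := hFG.isFactorization hF hG
  have pyramid_of_left {F G : Set (Fin n → ℝ)} {α β} (h : IsFactorization P F G α β)
      (hdegF : c * polyDeg F ≤ polyDim F) : IsLatticePyramid P := by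
    refine h.isLatticePyramid_of_left hP hdim hPG ?_
    exact ih _ (by have := h.polyDim_add; omega) n F rfl h.left
      (h.isGorenstein_left hP hdim hPG) hdegF
  rcases hαβ.mul_polyDeg_le_or hdeg with hdegF | hdegG
  · exact pyramid_of_left hαβ hdegF
  · exact pyramid_of_left hαβ.symm hdegG

/-- If every Gorenstein polytope of dimension `d` and degree `s` with `d > 2s` is
reducible, then every Gorenstein polytope of dimension `d` and degree `s` with
`d ≥ 3s` is a lattice pyramid. -/
theorem stmt5
    (H : ∀ (N : ℕ) (P : Set (Fin N → ℝ)), IsLatticePolytope P → IsGorenstein P →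
      2 * polyDeg P < polyDim P → IsReducible P) :
    ∀ (N : ℕ) (P : Set (Fin N → ℝ)), IsLatticePolytope P → IsGorenstein P →
      3 * polyDeg P ≤ polyDim P → IsLatticePyramid P :=
  stmt5_general 3 fun N P hP hG hdim hdeg => H N P hP hG (by omega)
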